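/- Let β > 0, ρ ∈ (0,λ_1), and for every r ∈ ℝ let the two-overlap distributions under the full and restricted Gibbs measures be E𝒢_{β,N}^{×2}[1_{{q^N(v,v') ≤ r}}] and E𝒢_{β,N,ρ}^{×2}[1_{{q^N(v,v') ≤ r}}]. Then lim_{N→∞} |E𝒢_{β,N}^{×2}[1_{{q^N(v,v') ≤ r}}] − E𝒢_{β,N,ρ}^{×2}[1_{{q^N(v,v') ≤ r}}]| = 0, and this holds even when r depends on ρ. -/

import Mathlib

open Filter
open scoped Classical

noncomputable section GFFCommon

/-- Vertices of `ℤ²`. -/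
abbrev Vtx : Type := ℤ × ℤ

/-- Sample space: a real-valued field indexed by the vertices of `ℤ²`. -/
abbrev FieldSp : Type := Vtx → ℝ

/-- The box `V_N = {0,1,…,N}²`. -/
def VN (N : ℕ) : Finset Vtx := Finset.Icc (0, 0) ((N : ℤ), (N : ℤ))

/-- The boundary `∂B` of a finite box `B ⊆ ℤ²`:
vertices of `B` having a (Euclidean distance 1) neighbour outside `B`. -/
def bdry (B : Finset Vtx) : Finset Vtx :=
  B.filter fun v =>
    ¬((v.1 + 1, v.2) ∈ B ∧ (v.1 - 1, v.2) ∈ B ∧ (v.1, v.2 + 1) ∈ B ∧ (v.1, v.2 - 1) ∈ B)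

/-- The interior `B° = B ∖ ∂B`. -/
def intr (B : Finset Vtx) : Finset Vtx := B \ bdry B

/-- The neighbourhood `[v]_λ` of `v` in `V_N`. -/
def nbhd (N : ℕ) (lam : ℝ) (v : Vtx) : Finset Vtx :=
  if lam = 0 then VN N
  else if lam = 1 then {v}
  else (VN N).filter fun w =>
    |(w.1 : ℝ) - (v.1 : ℝ)| ≤ (N : ℝ) ^ ((1 : ℝ) - lam) / 2 ∧
    |(w.2 : ℝ) - (v.2 : ℝ)| ≤ (N : ℝ) ^ ((1 : ℝ) - lam) / 2

/-- The σ-algebra `F_{∂[v]_λ ∪ [v]_λ^c}`, generated by the field variables on the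
boundary of `[v]_λ` and those outside of it. -/
def scaleAlg (N : ℕ) (lam : ℝ) (v : Vtx) : MeasurableSpace FieldSp :=
  ⨆ w ∈ {w : Vtx | w ∈ VN N ∧ w ∉ intr (nbhd N lam v)},
    MeasurableSpace.comap (fun ω : FieldSp => ω w) inferInstance

/-- `G` is the Green function of simple random walk killed on `∂B`, normalized by `π/2`:
it vanishes unless both arguments are in `B°`, and in `B°` it satisfies the
first-step (discrete Poisson equation) characterization
`G(x,y) = (1/4)·Σ_{x'∼x} G(x',y) + (π/2)·1_{x=y}`. -/
def IsGreenFn (B : Finset Vtx) (G : Vtx → Vtx → ℝ) : Prop :=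
  (∀ x y : Vtx, x ∉ intr B ∨ y ∉ intr B → G x y = 0) ∧
  ∀ y ∈ intr B, ∀ x ∈ intr B,
    G x y = (G (x.1 + 1, x.2) y + G (x.1 - 1, x.2) y
        + G (x.1, x.2 + 1) y + G (x.1, x.2 - 1) y) / 4
      + (Real.pi / 2) * (if x = y then 1 else 0)

/-- `P` is the law (on the canonical space `FieldSp`) of the Gaussian free field on `V_N`:
a centered Gaussian field with covariance the Green function `G_{V_N}`. -/
def IsGFF (N : ℕ) (P : MeasureTheory.Measure FieldSp) : Prop :=
  MeasureTheory.IsProbabilityMeasure P ∧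
  ∃ G : Vtx → Vtx → ℝ, IsGreenFn (VN N) G ∧
    ∀ c : Vtx → ℝ,
      P.map (fun ω => ∑ v ∈ VN N, c v * ω v) =
        ProbabilityTheory.gaussianReal 0 (Real.toNNReal (∑ v ∈ VN N, ∑ w ∈ VN N, c v * c w * G v w))

open MeasureTheory in
/-- `φ_v(λ) = E[φ_v | F_{∂[v]_λ ∪ [v]_λ^c}]`. -/
def phiScale (N : ℕ) (P : MeasureTheory.Measure FieldSp) (v : Vtx) (lam : ℝ) : FieldSp → ℝ :=
  P[fun ω : FieldSp => ω v | scaleAlg N lam v]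

/-- Admissible parameters `(σ,λ)`: `σ_1,…,σ_M > 0` and `0 = λ_0 < λ_1 < … < λ_M = 1`. -/
def ScaleParams (M : ℕ) (sigv lamv : ℕ → ℝ) : Prop :=
  1 ≤ M ∧ (∀ i ∈ Finset.Icc 1 M, 0 < sigv i) ∧
  lamv 0 = 0 ∧ lamv M = 1 ∧ ∀ i, i < M → lamv i < lamv (i + 1)

/-- The `(σ,λ)`-GFF: `ψ_v = Σ_{i=1}^M σ_i (φ_v(λ_i) − φ_v(λ_{i−1}))`. -/
def psiFld (N M : ℕ) (sigv lamv : ℕ → ℝ) (P : MeasureTheory.Measure FieldSp) (v : Vtx) : FieldSp → ℝ :=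
  fun ω => ∑ i ∈ Finset.Icc 1 M, sigv i * (phiScale N P v (lamv i) ω - phiScale N P v (lamv (i - 1)) ω)

open MeasureTheory in
/-- `ψ_v(λ) = E[ψ_v | F_{∂[v]_λ ∪ [v]_λ^c}]`. -/
def psiScale (N M : ℕ) (sigv lamv : ℕ → ℝ) (P : MeasureTheory.Measure FieldSp) (v : Vtx) (lam : ℝ) :
    FieldSp → ℝ :=
  P[psiFld N M sigv lamv P v | scaleAlg N lam v]

/-- The increment `ψ_v(λ,λ') = ψ_v(λ') − ψ_v(λ)`. -/
def psiInc (N M : ℕ) (sigv lamv : ℕ → ℝ) (P : MeasureTheory.Measure FieldSp) (v : Vtx) (lam lam' : ℝ) :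
    FieldSp → ℝ :=
  fun ω => psiScale N M sigv lamv P v lam' ω - psiScale N M sigv lamv P v lam ω

/-- The step function `σ(s) = σ_1 1_{{0}}(s) + Σ_{i=1}^M σ_i 1_{(λ_{i−1},λ_i]}(s)`. -/
def stepFn (M : ℕ) (sigv lamv : ℕ → ℝ) (s : ℝ) : ℝ :=
  (if s = 0 then sigv 1 else 0) +
  ∑ i ∈ Finset.Icc 1 M, if lamv (i - 1) < s ∧ s ≤ lamv i then sigv i else 0

/-- `𝒥_f(s) = ∫_0^s f(r) dr`. -/
def Jint (f : ℝ → ℝ) (s : ℝ) : ℝ := ∫ r in (0:ℝ)..s, f r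

/-- `𝒥_f(s₁,s₂) = ∫_{s₁}^{s₂} f(r) dr`. -/
def Jint2 (f : ℝ → ℝ) (s₁ s₂ : ℝ) : ℝ := ∫ r in s₁..s₂, f r

/-- The speed function `𝒥_{σ²}`. -/
def Jsig2 (M : ℕ) (sigv lamv : ℕ → ℝ) (s : ℝ) : ℝ := Jint (fun r => (stepFn M sigv lamv r) ^ 2) s

/-- The normalized speed function `𝒥̄_{σ²} = 𝒥_{σ²}/𝒥_{σ²}(1)`. -/
def JsigBar (M : ℕ) (sigv lamv : ℕ → ℝ) (s : ℝ) : ℝ := Jsig2 M sigv lamv s / Jsig2 M sigv lamv 1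

/-- The concave hull on `[0,1]` of a function `f`, i.e. the pointwise infimum over all
concave functions dominating `f` on `[0,1]`. -/
def concaveHull (f : ℝ → ℝ) (s : ℝ) : ℝ :=
  sInf {y | ∃ g : ℝ → ℝ, ConcaveOn ℝ (Set.Icc (0:ℝ) 1) g ∧
    (∀ t ∈ Set.Icc (0:ℝ) 1, f t ≤ g t) ∧ y = g s}

/-- The effective parameters: jump scales `0 = λ⁰ < … < λ^m = 1`, values
`σ̄_1 > … > σ̄_m > 0`, and the left-continuous non-increasing step function `σ̄`
such that `∫_0^s σ̄²` is the concavification of `𝒥_{σ²}`. -/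
def EffParams (M : ℕ) (sigv lamv : ℕ → ℝ) (m : ℕ) (sigb lamb : ℕ → ℝ) (sigbar : ℝ → ℝ) : Prop :=
  1 ≤ m ∧ m ≤ M ∧ lamb 0 = 0 ∧ lamb m = 1 ∧ (∀ j, j < m → lamb j < lamb (j + 1)) ∧
  (∀ l, 1 ≤ l → l < m → sigb (l + 1) < sigb l) ∧ (∀ l ∈ Finset.Icc 1 m, 0 < sigb l) ∧
  sigbar 0 = sigb 1 ∧
  (∀ l ∈ Finset.Icc 1 m, ∀ s : ℝ, lamb (l - 1) < s → s ≤ lamb l → sigbar s = sigb l) ∧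
  (∀ s : ℝ, 0 < s → s ≤ 1 →
    concaveHull (Jsig2 M sigv lamv) s = ∫ r in (0:ℝ)..s, (sigbar r) ^ 2)

/-- `γ* = 𝒥_{σ²/σ̄}(1)`. -/
def gammaStar (M : ℕ) (sigv lamv : ℕ → ℝ) (sigbar : ℝ → ℝ) : ℝ :=
  ∫ s in (0:ℝ)..1, (stepFn M sigv lamv s) ^ 2 / sigbar s

/-- The critical levels `γ^l = ∫_0^1 σ²(s)/σ̄(s ∧ λ^l) ds`, `γ⁰ = 0`. -/
def gammaL (M : ℕ) (sigv lamv : ℕ → ℝ) (lamb : ℕ → ℝ) (sigbar : ℝ → ℝ) (l : ℕ) : ℝ :=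
  if l = 0 then 0 else ∫ s in (0:ℝ)..1, (stepFn M sigv lamv s) ^ 2 / sigbar (min s (lamb l))

/-- `EntE` is the entropy function `𝓔` of the model. -/
def IsEntropy (M : ℕ) (sigv lamv : ℕ → ℝ) (m : ℕ) (lamb : ℕ → ℝ) (sigbar : ℝ → ℝ)
    (EntE : ℝ → ℝ) : Prop :=
  EntE 0 = 1 ∧
  ∀ l ∈ Finset.Icc 1 m, ∀ γ : ℝ,
    gammaL M sigv lamv lamb sigbar (l - 1) < γ → γ ≤ gammaL M sigv lamv lamb sigbar l →
      EntE γ = (1 - lamb (l - 1)) -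
        (γ - ∫ s in (0:ℝ)..(lamb (l - 1)), (stepFn M sigv lamv s) ^ 2 / sigbar s) ^ 2 /
          Jint2 (fun r => (stepFn M sigv lamv r) ^ 2) (lamb (l - 1)) 1

/-- The limiting free energy of the `REM(σ)` model. -/
def fREM (σ β : ℝ) : ℝ :=
  if (2 / σ) < β then 2 * (β / (2 / σ)) else 1 + (β / (2 / σ)) ^ 2

/-- The index `l_β`. -/
def lbeta (m : ℕ) (sigb : ℕ → ℝ) (β : ℝ) : ℕ :=
  if β ≤ 2 / sigb m then sInf {l : ℕ | 1 ≤ l ∧ β ≤ 2 / sigb l} else m + 1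

/-- The limiting free energy `f^ψ(β)`, written with the `l_β` split. -/
def fpsiLim (m : ℕ) (sigb lamb : ℕ → ℝ) (β : ℝ) : ℝ :=
  (∑ j ∈ Finset.Icc 1 (lbeta m sigb β - 1), (2 * β / (2 / sigb j)) * (lamb j - lamb (j - 1))) +
  ∑ j ∈ Finset.Icc (lbeta m sigb β) m, (1 + β ^ 2 / (2 / sigb j) ^ 2) * (lamb j - lamb (j - 1))

/-- The set `ℬ` of non-critical inverse temperatures. -/
def critSet (m : ℕ) (sigb : ℕ → ℝ) : Set ℝ :=
  {β | 0 < β ∧ ∀ j ∈ Finset.Icc 1 m, β ≠ 2 / sigb j}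

/-- The partition function `Z_N^ψ(β)`. -/
def ZN (N M : ℕ) (sigv lamv : ℕ → ℝ) (P : MeasureTheory.Measure FieldSp) (β : ℝ) (ω : FieldSp) : ℝ :=
  ∑ v ∈ VN N, Real.exp (β * psiFld N M sigv lamv P v ω)

/-- The free energy `f_N^ψ(β)` on `V_N`. -/
def freeEnergy (N M : ℕ) (sigv lamv : ℕ → ℝ) (P : MeasureTheory.Measure FieldSp) (β : ℝ) (ω : FieldSp) : ℝ :=
  (Real.log ((N : ℝ) ^ 2))⁻¹ * Real.log (ZN N M sigv lamv P β ω)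

/-- The set `A_{N,ρ}` of points at distance at least `N^{1−ρ}` from `ℤ² ∖ V_N`. -/
def AN (N : ℕ) (ρ : ℝ) : Finset Vtx :=
  (VN N).filter fun v => ∀ z : Vtx, z ∉ VN N →
    (N : ℝ) ^ ((1 : ℝ) - ρ) ≤ Real.sqrt (((v.1 : ℝ) - (z.1 : ℝ)) ^ 2 + ((v.2 : ℝ) - (z.2 : ℝ)) ^ 2)

/-- The restricted partition function `Z_{N,ρ}^ψ(β)`. -/
def ZNres (N M : ℕ) (sigv lamv : ℕ → ℝ) (P : MeasureTheory.Measure FieldSp) (β ρ : ℝ) (ω : FieldSp) : ℝ :=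
  ∑ v ∈ AN N ρ, Real.exp (β * psiFld N M sigv lamv P v ω)

/-- The free energy `f_{N,ρ}^ψ(β)` on `A_{N,ρ}`. -/
def freeEnergyRes (N M : ℕ) (sigv lamv : ℕ → ℝ) (P : MeasureTheory.Measure FieldSp) (β ρ : ℝ)
    (ω : FieldSp) : ℝ :=
  (Real.log ((N : ℝ) ^ 2))⁻¹ * Real.log (ZNres N M sigv lamv P β ρ ω)

/-- The Gibbs weight `𝒢_{β,N}({v})`. -/
def gibbsW (N M : ℕ) (sigv lamv : ℕ → ℝ) (P : MeasureTheory.Measure FieldSp) (β : ℝ) (v : Vtx)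
    (ω : FieldSp) : ℝ :=
  Real.exp (β * psiFld N M sigv lamv P v ω) / ZN N M sigv lamv P β ω

/-- The restricted Gibbs weight `𝒢_{β,N,ρ}({v})`. -/
def gibbsWres (N M : ℕ) (sigv lamv : ℕ → ℝ) (P : MeasureTheory.Measure FieldSp) (β ρ : ℝ) (v : Vtx)
    (ω : FieldSp) : ℝ :=
  Real.exp (β * psiFld N M sigv lamv P v ω) / ZNres N M sigv lamv P β ρ ω

/-- `E𝒢_{β,N}^{×s}[F]`: the mean over the disorder of the `s`-fold Gibbs average of `F`. -/
def gibbsExp (N M : ℕ) (sigv lamv : ℕ → ℝ) (P : MeasureTheory.Measure FieldSp) (β : ℝ) (s : ℕ)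
    (F : (Fin s → Vtx) → ℝ) : ℝ :=
  ∫ ω, (∑ vv ∈ Fintype.piFinset (fun _ : Fin s => VN N),
    (∏ i, gibbsW N M sigv lamv P β (vv i) ω) * F vv) ∂P

/-- `E𝒢_{β,N,ρ}^{×s}[F]`, with an `ω`-dependent integrand allowed. -/
def gibbsExpRes (N M : ℕ) (sigv lamv : ℕ → ℝ) (P : MeasureTheory.Measure FieldSp) (β ρ : ℝ) (s : ℕ)
    (F : (Fin s → Vtx) → FieldSp → ℝ) : ℝ :=
  ∫ ω, (∑ vv ∈ Fintype.piFinset (fun _ : Fin s => AN N ρ),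
    (∏ i, gibbsWres N M sigv lamv P β ρ (vv i) ω) * F vv ω) ∂P

/-- `E𝒢_{β,N}^{×s}[F]`, with an `ω`-dependent integrand allowed. -/
def gibbsExpW (N M : ℕ) (sigv lamv : ℕ → ℝ) (P : MeasureTheory.Measure FieldSp) (β : ℝ) (s : ℕ)
    (F : (Fin s → Vtx) → FieldSp → ℝ) : ℝ :=
  ∫ ω, (∑ vv ∈ Fintype.piFinset (fun _ : Fin s => VN N),
    (∏ i, gibbsW N M sigv lamv P β (vv i) ω) * F vv ω) ∂P

/-- The covariance `E[ψ_v ψ_{v'}]`. -/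
def psiCov (N M : ℕ) (sigv lamv : ℕ → ℝ) (P : MeasureTheory.Measure FieldSp) (v v' : Vtx) : ℝ :=
  ∫ ω, psiFld N M sigv lamv P v ω * psiFld N M sigv lamv P v' ω ∂P

/-- `C₀` is a constant witnessing the uniform variance upper bound
`max_{v∈V_N} E[ψ_v²] ≤ 𝒥_{σ²}(1) log N + C₀` for `N` large. -/
def IsVarBound (M : ℕ) (sigv lamv : ℕ → ℝ) (P : ℕ → MeasureTheory.Measure FieldSp) (C₀ : ℝ) : Prop :=
  0 < C₀ ∧ ∃ N₀ : ℕ, ∀ N ≥ N₀, ∀ v ∈ VN N,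
    psiCov N M sigv lamv (P N) v v ≤ Jsig2 M sigv lamv 1 * Real.log N + C₀

/-- The overlap `q^N(v,v')`. -/
def overlapQ (N M : ℕ) (sigv lamv : ℕ → ℝ) (P : MeasureTheory.Measure FieldSp) (C₀ : ℝ) (v v' : Vtx) : ℝ :=
  psiCov N M sigv lamv P v v' / (Jsig2 M sigv lamv 1 * Real.log N + C₀)

/-- Convergence in probability to a constant, for a sequence of random variables on a
sequence of probability spaces. -/
def TendstoInProb (P : ℕ → MeasureTheory.Measure FieldSp) (X : ℕ → FieldSp → ℝ) (c : ℝ) : Prop :=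
  ∀ ε : ℝ, 0 < ε → Tendsto (fun N => P N {ω | ε < |X N ω - c|}) atTop (nhds 0)

/-- Convergence in `L^p` to a constant. -/
def TendstoLp (P : ℕ → MeasureTheory.Measure FieldSp) (X : ℕ → FieldSp → ℝ) (p c : ℝ) : Prop :=
  Tendsto (fun N => ∫ ω, |X N ω - c| ^ p ∂(P N)) atTop (nhds 0)

/-- The branching scale `b_N(v,v')`. -/
def bScale (N : ℕ) (v v' : Vtx) : ℝ :=
  sSup {lam : ℝ | lam ∈ Set.Icc (0:ℝ) 1 ∧ ((nbhd N lam v) ∩ (nbhd N lam v')).Nonempty}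

end GFFCommon

noncomputable section PT

def avg4 (f : Vtx → ℝ) (x : Vtx) : ℝ :=
  (f (x.1 + 1, x.2) + f (x.1 - 1, x.2) + f (x.1, x.2 + 1) + f (x.1, x.2 - 1)) / 4

def IsGr (D : Finset Vtx) (G : Vtx → Vtx → ℝ) : Prop :=
  (∀ x y : Vtx, x ∉ D ∨ y ∉ D → G x y = 0) ∧
  ∀ y ∈ D, ∀ x ∈ D,
    G x y = avg4 (fun z => G z y) x + (Real.pi / 2) * (if x = y then 1 else 0)

lemma isGr_of (B : Finset Vtx) (G) (h : IsGreenFn B G) : IsGr (intr B) G := h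

def isNb (x y : Vtx) : Prop :=
  y = (x.1 + 1, x.2) ∨ y = (x.1 - 1, x.2) ∨ y = (x.1, x.2 + 1) ∨ y = (x.1, x.2 - 1)

lemma maxp_nb (D : Finset Vtx) (f : Vtx → ℝ) (hD : ∀ x ∈ D, f x ≤ avg4 f x)
    (h0 : ∀ x ∈ D, ∀ y, isNb x y → y ∉ D → f y ≤ 0) : ∀ x ∈ D, f x ≤ 0 := by
  by_contra hcon
  push Not at hcon
  obtain ⟨z, hz, hfz⟩ := hcon
  obtain ⟨x0, hx0, hmax⟩ := D.exists_max_image f ⟨z, hz⟩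
  have hM : 0 < f x0 := lt_of_lt_of_le hfz (hmax z hz)
  obtain ⟨x1, hx1, hmax1⟩ := (D.filter (fun x => f x = f x0)).exists_max_image (fun x => x.1)
    ⟨x0, by simp [hx0]⟩
  simp only [Finset.mem_filter] at hx1 hmax1
  have hle : ∀ y, isNb x1 y → f y ≤ f x0 := by
    intro y hy
    by_cases h : y ∈ D
    · exact hmax y h
    · exact (h0 x1 hx1.1 y hy h).trans hM.le
  have e1 := hle (x1.1 + 1, x1.2) (by simp [isNb])
  have e2 := hle (x1.1 - 1, x1.2) (by simp [isNb])
  have e3 := hle (x1.1, x1.2 + 1) (by simp [isNb])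
  have e4 := hle (x1.1, x1.2 - 1) (by simp [isNb])
  have := hD x1 hx1.1
  unfold avg4 at this
  have e5 : f (x1.1 + 1, x1.2) = f x0 := by linarith [hx1.2]
  have e6 : (x1.1 + 1, x1.2) ∈ D := by
    by_contra h
    have := h0 x1 hx1.1 (x1.1 + 1, x1.2) (by simp [isNb]) h
    linarith
  have := hmax1 _ ⟨e6, e5⟩
  simp at this

lemma maxp (D : Finset Vtx) (f : Vtx → ℝ) (hD : ∀ x ∈ D, f x ≤ avg4 f x)
    (h0 : ∀ x ∉ D, f x ≤ 0) : ∀ x, f x ≤ 0 := by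
  intro x
  by_cases hx : x ∈ D
  · exact maxp_nb D f hD (fun _ _ y _ hy => h0 y hy) x hx
  · exact h0 x hx

lemma avg4_add (f g : Vtx → ℝ) (x) : avg4 (fun z => f z + g z) x = avg4 f x + avg4 g x := by
  simp [avg4]; ring
lemma avg4_sub (f g : Vtx → ℝ) (x) : avg4 (fun z => f z - g z) x = avg4 f x - avg4 g x := by
  simp [avg4]; ring
lemma avg4_smul (c : ℝ) (g : Vtx → ℝ) (x) : avg4 (fun z => c * g z) x = c * avg4 g x := by
  simp [avg4]; ring
lemma avg4_const (c : ℝ) (x) : avg4 (fun _ => c) x = c := by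
  simp [avg4]; ring
lemma avg4_sum {ι : Type*} (s : Finset ι) (f : ι → Vtx → ℝ) (x) :
    avg4 (fun z => ∑ i ∈ s, f i z) x = ∑ i ∈ s, avg4 (f i) x := by
  simp [avg4, ← Finset.sum_div, Finset.sum_add_distrib]

lemma uniq0 (D : Finset Vtx) (f : Vtx → ℝ) (hD : ∀ x ∈ D, f x = avg4 f x)
    (h0 : ∀ x ∉ D, f x = 0) : ∀ x, f x = 0 := by
  intro x
  apply le_antisymm
  · exact maxp D f (fun x hx => (hD x hx).le) (fun x hx => (h0 x hx).le) x
  · have := maxp D (fun z => (-1) * f z) (fun x hx => by rw [avg4_smul, ← hD x hx])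
      (fun x hx => by simp [h0 x hx]) x
    linarith

def extD (D : Finset Vtx) (u : D → ℝ) (x : Vtx) : ℝ := if h : x ∈ D then u ⟨x, h⟩ else 0

def lapL (D : Finset Vtx) : (D → ℝ) →ₗ[ℝ] (D → ℝ) where
  toFun u := fun x => extD D u x - avg4 (extD D u) x
  map_add' u w := by
    have : extD D (u + w) = fun z => extD D u z + extD D w z := by
      funext z; by_cases h : z ∈ D <;> simp [extD, h]
    funext x
    rw [this, avg4_add]; simp only [Pi.add_apply]; ring
  map_smul' c u := by
    have : extD D (c • u) = fun z => c * extD D u z := by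
      funext z; by_cases h : z ∈ D <;> simp [extD, h]
    funext x
    rw [this, avg4_smul]; simp only [Pi.smul_apply, smul_eq_mul, RingHom.id_apply]; ring

lemma lapL_surj (D : Finset Vtx) : Function.Surjective (lapL D) := by
  rw [← LinearMap.injective_iff_surjective, injective_iff_map_eq_zero]
  intro u hu
  have := uniq0 D (extD D u) (fun x hx => by
    have := congrFun hu ⟨x, hx⟩
    simp only [lapL, LinearMap.coe_mk, AddHom.coe_mk, Pi.zero_apply] at this
    linarith) (fun x hx => by simp [extD, hx])
  funext x
  have h := this x
  simpa [extD] using h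

lemma exists_dir (D : Finset Vtx) (f g : Vtx → ℝ) :
    ∃ u : Vtx → ℝ, (∀ x ∉ D, u x = f x) ∧ ∀ x ∈ D, u x = avg4 u x + g x := by
  set f0 : Vtx → ℝ := fun x => if x ∈ D then 0 else f x with hf0
  obtain ⟨u, hu⟩ := lapL_surj D (fun x => g x + avg4 f0 x)
  refine ⟨fun z => extD D u z + f0 z, ?_, ?_⟩
  · intro x hx; simp [extD, hf0, hx]
  · intro x hx
    have := congrFun hu ⟨x, hx⟩
    simp only [lapL, LinearMap.coe_mk, AddHom.coe_mk] at this
    rw [avg4_add]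
    have h2 : f0 x = 0 := by simp [hf0, hx]
    simp only [h2]; linarith

def dirF (D : Finset Vtx) (f : Vtx → ℝ) : Vtx → ℝ := (exists_dir D f (fun _ => 0)).choose

lemma dirF_off (D : Finset Vtx) (f : Vtx → ℝ) {x} (hx : x ∉ D) : dirF D f x = f x :=
  (exists_dir D f (fun _ => 0)).choose_spec.1 x hx
lemma dirF_on (D : Finset Vtx) (f : Vtx → ℝ) {x} (hx : x ∈ D) :
    dirF D f x = avg4 (dirF D f) x := by
  have := (exists_dir D f (fun _ => 0)).choose_spec.2 x hx
  rw [add_zero] at this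
  exact this

lemma dirF_uniq (D : Finset Vtx) (f u : Vtx → ℝ) (h0 : ∀ x ∉ D, u x = f x)
    (h1 : ∀ x ∈ D, u x = avg4 u x) : dirF D f = u := by
  funext x
  have := uniq0 D (fun z => dirF D f z - u z)
    (fun x hx => by rw [avg4_sub, ← dirF_on D f hx, ← h1 x hx])
    (fun x hx => by rw [dirF_off D f hx, h0 x hx, sub_self]) x
  linarith

def dir (D : Finset Vtx) : (Vtx → ℝ) →ₗ[ℝ] (Vtx → ℝ) where
  toFun := dirF D
  map_add' f g := by
    apply dirF_uniq
    · intro x hx; simp [dirF_off D _ hx]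
    · intro x hx
      have := avg4_add (dirF D f) (dirF D g) x
      rw [← dirF_on D f hx, ← dirF_on D g hx] at this
      exact this.symm
  map_smul' c f := by
    apply dirF_uniq
    · intro x hx; simp [dirF_off D _ hx]
    · intro x hx
      have := avg4_smul c (dirF D f) x
      rw [← dirF_on D f hx] at this
      exact this.symm

lemma dir_off (D : Finset Vtx) (f : Vtx → ℝ) {x} (hx : x ∉ D) : dir D f x = f x := dirF_off D f hx
lemma dir_on (D : Finset Vtx) (f : Vtx → ℝ) {x} (hx : x ∈ D) :
    dir D f x = avg4 (dir D f) x := dirF_on D f hx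
lemma dir_uniq (D : Finset Vtx) (f u : Vtx → ℝ) (h0 : ∀ x ∉ D, u x = f x)
    (h1 : ∀ x ∈ D, u x = avg4 u x) : dir D f = u := dirF_uniq D f u h0 h1

lemma dir_le (D : Finset Vtx) (f : Vtx → ℝ) (C : ℝ) (h : ∀ x ∉ D, f x ≤ C) (x) : dir D f x ≤ C := by
  have := maxp D (fun z => dir D f z - C)
    (fun x hx => by rw [avg4_sub, ← dir_on D f hx, avg4_const])
    (fun x hx => by rw [dir_off D f hx]; linarith [h x hx]) x
  linarith

lemma dir_nonneg (D : Finset Vtx) (f : Vtx → ℝ) (h : ∀ x ∉ D, 0 ≤ f x) (x) : 0 ≤ dir D f x := by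
  have := dir_le D (-f) 0 (fun x hx => by simpa using h x hx) x
  rw [map_neg] at this
  simpa using this

/-- Poisson kernel. -/
def pk (D : Finset Vtx) (v w : Vtx) : ℝ := dir D (Pi.single w 1) v

lemma pk_nonneg (D : Finset Vtx) (v w) : 0 ≤ pk D v w :=
  dir_nonneg D _ (fun x _ => by
    by_cases h : x = w
    · subst h; simp
    · simp [Pi.single_eq_of_ne h]) v

lemma pk_zero (D : Finset Vtx) (v) {w} (hw : w ∈ D) : pk D v w = 0 := by
  have : dir D (Pi.single w 1) = fun _ => 0 := dir_uniq D _ _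
    (fun x hx => by
      have : x ≠ w := fun h => hx (h ▸ hw)
      simp [Pi.single_eq_of_ne this]) (fun x _ => (avg4_const 0 x).symm)
  simp [pk, this]

lemma dir_eq_sum (D : Finset Vtx) (L : Finset Vtx) (f : Vtx → ℝ) (hf : ∀ x ∉ L, f x = 0) (v) :
    dir D f v = ∑ w ∈ L, pk D v w * f w := by
  have : f = ∑ w ∈ L, f w • (Pi.single w 1 : Vtx → ℝ) := by
    funext x
    simp only [Finset.sum_apply, Pi.smul_apply, smul_eq_mul, Pi.single_apply]
    by_cases h : x ∈ L
    · simp [h]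
    · simp [h, hf x h]
  conv_lhs => rw [this]
  simp only [map_sum, map_smul, Finset.sum_apply, Pi.smul_apply, smul_eq_mul, pk]
  exact Finset.sum_congr rfl fun _ _ => mul_comm _ _

/-! Green functions -/

lemma exists_gr (D : Finset Vtx) : ∃ G, IsGr D G := by
  choose u h0 h1 using fun y : Vtx => exists_dir D (fun _ => 0)
    (fun x => (Real.pi / 2) * (if x = y then 1 else 0))
  refine ⟨fun x y => if y ∈ D then u y x else 0, ?_, ?_⟩
  · rintro x y (h | h)
    · by_cases hy : y ∈ D <;> simp [hy, h0 y x h]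
    · simp [h]
  · intro y hy x hx
    simp only [hy, if_true]
    exact h1 y x hx

def gr (D : Finset Vtx) : Vtx → Vtx → ℝ := (exists_gr D).choose
lemma gr_spec (D : Finset Vtx) : IsGr D (gr D) := (exists_gr D).choose_spec

lemma IsGr.uniq {D : Finset Vtx} {G G'} (h : IsGr D G) (h' : IsGr D G') : G = G' := by
  funext x y
  by_cases hy : y ∈ D
  · have := uniq0 D (fun z => G z y - G' z y) (fun x hx => by
      rw [avg4_sub, h.2 y hy x hx, h'.2 y hy x hx]; ring)
      (fun x hx => by rw [h.1 x y (Or.inl hx), h'.1 x y (Or.inl hx), sub_self]) x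
    linarith
  · rw [h.1 x y (Or.inr hy), h'.1 x y (Or.inr hy)]

lemma IsGr.nonneg {D : Finset Vtx} {G} (h : IsGr D G) (x y) : 0 ≤ G x y := by
  by_cases hy : y ∈ D
  · have := maxp D (fun z => (-1) * G z y) (fun x hx => by
      rw [avg4_smul, h.2 y hy x hx]
      have : 0 ≤ (Real.pi / 2) * (if x = y then (1:ℝ) else 0) := by positivity
      linarith)
      (fun x hx => by rw [h.1 x y (Or.inl hx)]; simp) x
    linarith
  · rw [h.1 x y (Or.inr hy)]

lemma IsGr.mono {D D' : Finset Vtx} (hD : D ⊆ D') {G G'} (h : IsGr D G) (h' : IsGr D' G') (x y) :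
    G x y ≤ G' x y := by
  by_cases hy : y ∈ D
  · have := maxp D (fun z => G z y - G' z y) (fun x hx => by
      rw [avg4_sub, h.2 y hy x hx, h'.2 y (hD hy) x (hD hx)]; apply le_of_eq; ring)
      (fun x hx => by rw [h.1 x y (Or.inl hx)]; linarith [h'.nonneg x y]) x
    linarith
  · rw [h.1 x y (Or.inr hy)]; exact h'.nonneg x y

/-- summation by parts -/
lemma shift_sum (D : Finset Vtx) (u w : Vtx → ℝ) (hu : ∀ x ∉ D, u x = 0) (hw : ∀ x ∉ D, w x = 0)
    (e : Vtx) : ∑ x ∈ D, u x * w (x + e) = ∑ x ∈ D, u (x - e) * w x := by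
  rw [← tsum_eq_sum (L := SummationFilter.unconditional _) (f := fun x => u x * w (x + e)) (s := D) (fun x hx => by simp [hu x hx]),
    ← tsum_eq_sum (L := SummationFilter.unconditional _) (f := fun x => u (x - e) * w x) (s := D) (fun x hx => by simp [hw x hx])]
  rw [← (Equiv.addRight e).tsum_eq (fun x => u (x - e) * w x)]
  simp

lemma avg4_eq (f : Vtx → ℝ) (x) : avg4 f x =
    (f (x + (1,0)) + f (x + (-1,0)) + f (x + (0,1)) + f (x + (0,-1))) / 4 := by
  obtain ⟨a, b⟩ := x
  simp [avg4, sub_eq_add_neg]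

lemma sum_avg4 (D : Finset Vtx) (u w : Vtx → ℝ) (hu : ∀ x ∉ D, u x = 0) (hw : ∀ x ∉ D, w x = 0) :
    ∑ x ∈ D, u x * avg4 w x = ∑ x ∈ D, avg4 u x * w x := by
  have h := shift_sum D u w hu hw
  have e1 : ∀ x, u x * avg4 w x = (u x * w (x + (1,0)) + u x * w (x + (-1,0)) + u x * w (x + (0,1))
     + u x * w (x + (0,-1))) / 4 := fun x => by rw [avg4_eq]; ring
  have e2 : ∀ x, avg4 u x * w x = (u (x - (1,0)) * w x + u (x - (-1,0)) * w x + u (x - (0,1)) * w x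
     + u (x - (0,-1)) * w x) / 4 := fun x => by
      rw [avg4_eq]
      have a1 : x - (1,0) = x + (-1,0) := by ext <;> simp [sub_eq_add_neg]
      have a2 : x - (-1,0) = x + (1,0) := by ext <;> simp [sub_eq_add_neg]
      have a3 : x - (0,1) = x + (0,-1) := by ext <;> simp [sub_eq_add_neg]
      have a4 : x - (0,-1) = x + (0,1) := by ext <;> simp [sub_eq_add_neg]
      rw [a1, a2, a3, a4]; ring
  simp only [e1, e2, ← Finset.sum_div, Finset.sum_add_distrib, h]

lemma IsGr.symm {D : Finset Vtx} {G} (h : IsGr D G) (y z) : G y z = G z y := by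
  by_cases hy : y ∈ D
  swap
  · rw [h.1 y z (Or.inl hy), h.1 z y (Or.inr hy)]
  by_cases hz : z ∈ D
  swap
  · rw [h.1 y z (Or.inr hz), h.1 z y (Or.inl hz)]
  have key := sum_avg4 D (fun x => G x y) (fun x => G x z) (fun x hx => h.1 x y (Or.inl hx))
    (fun x hx => h.1 x z (Or.inl hx))
  have e1 : ∑ x ∈ D, G x y * avg4 (fun x => G x z) x
      = ∑ x ∈ D, G x y * G x z - Real.pi / 2 * G z y := by
    have : ∀ x ∈ D, G x y * avg4 (fun x => G x z) x
        = G x y * G x z - (if x = z then Real.pi / 2 * G x y else 0) := by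
      intro x hx
      rw [h.2 z hz x hx]; split_ifs <;> ring
    rw [Finset.sum_congr rfl this, Finset.sum_sub_distrib]; simp [hz]
  have e2 : ∑ x ∈ D, avg4 (fun x => G x y) x * G x z
      = ∑ x ∈ D, G x y * G x z - Real.pi / 2 * G y z := by
    have : ∀ x ∈ D, avg4 (fun x => G x y) x * G x z
        = G x y * G x z - (if x = y then Real.pi / 2 * G x z else 0) := by
      intro x hx
      rw [h.2 y hy x hx]; split_ifs <;> ring
    rw [Finset.sum_congr rfl this, Finset.sum_sub_distrib]; simp [hy]
  rw [e1, e2] at key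
  have hpi := Real.pi_pos
  have : Real.pi / 2 * (G y z - G z y) = 0 := by linarith
  rcases mul_eq_zero.1 this with h | h <;> linarith

/-- quadratic form -/
def Q (L : Finset Vtx) (G : Vtx → Vtx → ℝ) (a b : Vtx → ℝ) : ℝ :=
  ∑ v ∈ L, ∑ w ∈ L, a v * b w * G v w

lemma sum_sq_avg (D : Finset Vtx) (u : Vtx → ℝ) (hu : ∀ x ∉ D, u x = 0) :
    ∑ x ∈ D, u x * avg4 u x ≤ ∑ x ∈ D, u x * u x := by
  have hs : ∀ e : Vtx, ∑ x ∈ D, u x * u (x + e) ≤ ∑ x ∈ D, u x * u x := by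
    intro e
    have h1 : ∑ x ∈ D, u (x + e) * u (x + e) ≤ ∑ x ∈ D, u x * u x := by
      have : ∑ x ∈ D, u (x + e) * u (x + e) = ∑ x ∈ D.image (· + e), u x * u x := by
        rw [Finset.sum_image (fun a _ b _ h => by simpa using h)]
      rw [this, ← Finset.sum_filter_add_sum_filter_not (D.image (· + e)) (· ∈ D)]
      have z : ∑ x ∈ (D.image (· + e)).filter (fun x => ¬ x ∈ D), u x * u x = 0 :=
        Finset.sum_eq_zero fun x hx => by simp [hu x (Finset.mem_filter.1 hx).2]
      rw [z, add_zero]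
      exact Finset.sum_le_sum_of_subset_of_nonneg (fun x hx => (Finset.mem_filter.1 hx).2)
        (fun x _ _ => mul_self_nonneg _)
    have h2 : ∑ x ∈ D, u x * u (x + e) ≤ ∑ x ∈ D, (u x * u x + u (x + e) * u (x + e)) / 2 :=
      Finset.sum_le_sum fun x _ => by nlinarith [sq_nonneg (u x - u (x + e))]
    rw [← Finset.sum_div, Finset.sum_add_distrib] at h2
    linarith
  have e1 : ∀ x, u x * avg4 u x = (u x * u (x + (1,0)) + u x * u (x + (-1,0)) + u x * u (x + (0,1))
     + u x * u (x + (0,-1))) / 4 := fun x => by rw [avg4_eq]; ring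
  simp only [e1, ← Finset.sum_div, Finset.sum_add_distrib]
  linarith [hs (1,0), hs (-1,0), hs (0,1), hs (0,-1)]

lemma IsGr.psd {D : Finset Vtx} {G} (h : IsGr D G) (L : Finset Vtx) (hL : D ⊆ L) (a : Vtx → ℝ) :
    0 ≤ Q L G a a := by
  set u : Vtx → ℝ := fun x => ∑ y ∈ L, a y * G x y with hu
  have hu0 : ∀ x ∉ D, u x = 0 := fun x hx => by simp [hu, h.1 x _ (Or.inl hx)]
  have hQ : Q L G a a = ∑ x ∈ D, a x * u x := by
    have : Q L G a a = ∑ x ∈ L, a x * u x := by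
      simp only [Q, hu, Finset.mul_sum]
      exact Finset.sum_congr rfl fun x _ => Finset.sum_congr rfl fun y _ => by ring
    rw [this]
    exact (Finset.sum_subset hL (fun x _ hx => by simp [hu0 x hx])).symm
  have hP : ∀ x ∈ D, u x - avg4 u x = Real.pi / 2 * a x := by
    intro x hx
    have : avg4 u x = ∑ y ∈ L, a y * avg4 (fun z => G z y) x := by
      rw [hu, avg4_sum]; exact Finset.sum_congr rfl fun y _ => avg4_smul _ _ _
    rw [this, hu]
    simp only
    rw [← Finset.sum_sub_distrib]
    have : ∀ y ∈ L, a y * G x y - a y * avg4 (fun z => G z y) x = if x = y then Real.pi / 2 * a y else 0 := by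
      intro y _
      by_cases hy : y ∈ D
      · rw [h.2 y hy x hx]; split_ifs <;> ring
      · have : x ≠ y := fun e => hy (e ▸ hx)
        simp [h.1 _ y (Or.inr hy), this, avg4]
    rw [Finset.sum_congr rfl this]
    simp [hL hx]
  have := sum_sq_avg D u hu0
  have h2 : ∑ x ∈ D, u x * u x - ∑ x ∈ D, u x * avg4 u x = Real.pi / 2 * ∑ x ∈ D, a x * u x := by
    rw [← Finset.sum_sub_distrib, Finset.mul_sum]
    refine Finset.sum_congr rfl fun x hx => ?_
    rw [← mul_sub, hP x hx]; ring
  rw [hQ]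
  have hpi := Real.pi_pos
  by_contra hneg
  push Not at hneg
  nlinarith

end PT

noncomputable section PT2

lemma log_sub_real (a b : ℝ) : 4 * Real.log (a^2 + b^2 + 1) ≤
    Real.log ((a+1)^2 + b^2 + 1) + Real.log ((a-1)^2 + b^2 + 1)
    + Real.log (a^2 + (b+1)^2 + 1) + Real.log (a^2 + (b-1)^2 + 1) := by
  have h1 : 0 < (a+1)^2 + b^2 + 1 := by positivity
  have h2 : 0 < (a-1)^2 + b^2 + 1 := by positivity
  have h3 : 0 < a^2 + (b+1)^2 + 1 := by positivity
  have h4 : 0 < a^2 + (b-1)^2 + 1 := by positivity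
  rw [← Real.log_mul h1.ne' h2.ne', ← Real.log_mul (by positivity) h3.ne',
    ← Real.log_mul (by positivity) h4.ne']
  have : 4 * Real.log (a^2 + b^2 + 1) = Real.log ((a^2 + b^2 + 1)^4) := by
    rw [Real.log_pow]; norm_num
  rw [this]
  apply Real.log_le_log (by positivity)
  have hA : 0 ≤ a^2 + b^2 := by positivity
  have key : ((a + 1) ^ 2 + b ^ 2 + 1) * ((a - 1) ^ 2 + b ^ 2 + 1) * (a ^ 2 + (b + 1) ^ 2 + 1) *
    (a ^ 2 + (b - 1) ^ 2 + 1) - (a^2 + b^2 + 1)^4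
    = 2 * (a^2+b^2+2)^2 + 16 * (a*b)^2 + 4 * (a^2+b^2) + 7 := by ring
  nlinarith [sq_nonneg (a^2+b^2+2), sq_nonneg (a*b)]

lemma log_super_real (a b : ℝ) (h : 9 ≤ a^2 + b^2) :
    Real.log ((a+1)^2 + b^2 - 1) + Real.log ((a-1)^2 + b^2 - 1)
    + Real.log (a^2 + (b+1)^2 - 1) + Real.log (a^2 + (b-1)^2 - 1)
    ≤ 4 * Real.log (a^2 + b^2 - 1) := by
  have h1 : 0 < (a+1)^2 + b^2 - 1 := by nlinarith [sq_nonneg (a+2), sq_nonneg (a + 9/2), sq_nonneg b, sq_nonneg (a+3)]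
  have h2 : 0 < (a-1)^2 + b^2 - 1 := by nlinarith [sq_nonneg (a-3), sq_nonneg b]
  have h3 : 0 < a^2 + (b+1)^2 - 1 := by nlinarith [sq_nonneg (b+3), sq_nonneg a]
  have h4 : 0 < a^2 + (b-1)^2 - 1 := by nlinarith [sq_nonneg (b-3), sq_nonneg a]
  rw [← Real.log_mul h1.ne' h2.ne', ← Real.log_mul (by positivity) h3.ne',
    ← Real.log_mul (by positivity) h4.ne']
  have : 4 * Real.log (a^2 + b^2 - 1) = Real.log ((a^2 + b^2 - 1)^4) := by
    rw [Real.log_pow]; norm_num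
  rw [this]
  apply Real.log_le_log (by positivity)
  have key : ((a + 1) ^ 2 + b ^ 2 - 1) * ((a - 1) ^ 2 + b ^ 2 - 1) * (a ^ 2 + (b + 1) ^ 2 - 1) *
    (a ^ 2 + (b - 1) ^ 2 - 1) - (a^2 + b^2 - 1)^4
    = - 6 * (a^2+b^2)^2 + 16 * (a^2 * b^2) + 4 * (a^2+b^2) - 1 := by ring
  nlinarith [sq_nonneg (a^2-b^2), sq_nonneg (a*b)]

def Bf (v : Vtx) (e1 e2 t : ℝ) (w : Vtx) : ℝ :=
  Real.log (((w.1 - v.1 : ℝ) + t * e1)^2 + ((w.2 - v.2 : ℝ) + t * e2)^2 - 1)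
   - Real.log ((w.1 - v.1 : ℝ)^2 + (w.2 - v.2 : ℝ)^2 + 1)

lemma Bf_super (v : Vtx) (e1 e2 t : ℝ) (w : Vtx)
    (h : 9 ≤ ((w.1 - v.1 : ℝ) + t * e1)^2 + ((w.2 - v.2 : ℝ) + t * e2)^2) :
    avg4 (Bf v e1 e2 t) w ≤ Bf v e1 e2 t w := by
  have h1 := log_super_real _ _ h
  have h2 := log_sub_real (w.1 - v.1 : ℝ) (w.2 - v.2 : ℝ)
  unfold avg4 Bf
  push_cast
  simp only [show ((w.1:ℝ) + 1 - v.1) = (w.1 - v.1) + 1 by ring,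
    show ((w.1:ℝ) - 1 - v.1) = (w.1 - v.1) - 1 by ring,
    show ((w.2:ℝ) + 1 - v.2) = (w.2 - v.2) + 1 by ring,
    show ((w.2:ℝ) - 1 - v.2) = (w.2 - v.2) - 1 by ring]
  generalize (w.1:ℝ) - v.1 = a at *
  generalize (w.2:ℝ) - v.2 = b at *
  simp only [show a + 1 + t * e1 = (a + t * e1) + 1 by ring, show a - 1 + t * e1 = (a + t * e1) - 1 by ring,
    show b + 1 + t * e2 = (b + t * e2) + 1 by ring, show b - 1 + t * e2 = (b + t * e2) - 1 by ring]
  linarith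

lemma Bf_super_v (v : Vtx) (e1 e2 t : ℝ) (h : 9 ≤ (t * e1)^2 + (t * e2)^2) :
    avg4 (Bf v e1 e2 t) v + Real.log 2 ≤ Bf v e1 e2 t v := by
  have h1 := log_super_real _ _ h
  unfold avg4 Bf
  push_cast
  simp only [show ((v.1:ℝ) + 1 - v.1) = 1 by ring,
    show ((v.1:ℝ) - 1 - v.1) = - 1 by ring, sub_self,
    show ((v.2:ℝ) + 1 - v.2) = 1 by ring,
    show ((v.2:ℝ) - 1 - v.2) = - 1 by ring]
  simp only [show 1 + t * e1 = (t * e1) + 1 by ring, show - 1 + t * e1 = (t * e1) - 1 by ring,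
    show 1 + t * e2 = (t * e2) + 1 by ring, show - 1 + t * e2 = (t * e2) - 1 by ring, zero_add]
  have e : Real.log ((1:ℝ)^2 + 0^2 + 1) = Real.log 2 := by norm_num
  have e' : Real.log ((-1:ℝ)^2 + 0^2 + 1) = Real.log 2 := by norm_num
  have e'' : Real.log ((0:ℝ)^2 + 1^2 + 1) = Real.log 2 := by norm_num
  have e3 : Real.log ((0:ℝ)^2 + (-1)^2 + 1) = Real.log 2 := by norm_num
  have e4 : Real.log ((0:ℝ)^2 + (0)^2 + 1) = 0 := by norm_num
  rw [e, e', e'', e3, e4]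
  linarith

def C1 : ℝ := (Real.pi / 2) / Real.log 2 * Real.log 25

lemma C1_nonneg : 0 ≤ C1 := by
  unfold C1
  have := Real.log_nonneg (show (1:ℝ) ≤ 2 by norm_num)
  have := Real.log_nonneg (show (1:ℝ) ≤ 25 by norm_num)
  positivity

def unitv (e1 e2 : ℤ) : Prop := (e1 = 1 ∧ e2 = 0) ∨ (e1 = -1 ∧ e2 = 0) ∨ (e1 = 0 ∧ e2 = 1) ∨ (e1 = 0 ∧ e2 = -1)

lemma barrier_final (a b e1 e2 m t : ℝ) (hes : e1^2 + e2^2 = 1) (hmr : 0 ≤ m)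
    (ht : t = 2 * (m + 2)) (hwr : m^2 ≤ a^2 + b^2) :
    (a + t * e1)^2 + (b + t * e2)^2 - 1 ≤ 25 * (a^2 + b^2 + 1) := by
  -- |z + t e|^2 ≤ (r + t)^2
  set r := Real.sqrt (a^2 + b^2) with hr
  have hr2 : r^2 = a^2 + b^2 := Real.sq_sqrt (by positivity)
  have hr0 : 0 ≤ r := Real.sqrt_nonneg _
  have hmr' : m ≤ r := by
    rw [hr]; exact Real.le_sqrt_of_sq_le hwr
  have hab : a * e1 + b * e2 ≤ r := by
    rw [hr]; apply Real.le_sqrt_of_sq_le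
    have : (a * e1 + b * e2)^2 + (a * e2 - b * e1)^2 = a^2+b^2 := by
      linear_combination (a^2+b^2) * hes
    nlinarith [sq_nonneg (a * e2 - b * e1)]
  have e : (a + t * e1)^2 + (b + t * e2)^2 = r^2 + 2 * t * (a * e1 + b * e2) + t^2 := by
    rw [hr2]; linear_combination t^2 * hes
  rw [e, ← hr2]
  have ht0 : 0 ≤ t := by rw [ht]; linarith
  have htr : t ≤ 2 * r + 4 := by rw [ht]; linarith
  have s1 : r^2 + 2 * t * (a * e1 + b * e2) + t^2 ≤ (r + t)^2 := by nlinarith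
  have s2 : (r + t)^2 ≤ (3 * r + 4)^2 := by
    apply pow_le_pow_left₀ (by linarith); linarith
  nlinarith [sq_nonneg (4 * r - 3)]

lemma green_barrier {D : Finset Vtx} {G} (hG : IsGr D G) (v : Vtx) (e1 e2 : ℤ) (he : unitv e1 e2)
    (m : ℤ) (hm : 0 ≤ m) (hD : ∀ w ∈ D, -m ≤ (w.1 - v.1) * e1 + (w.2 - v.2) * e2)
    (w : Vtx) (hw : m ≤ |w.1 - v.1| ∨ m ≤ |w.2 - v.2|) : G w v ≤ C1 := by
  by_cases hwD : w ∈ D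
  swap
  · rw [hG.1 w v (Or.inl hwD)]; exact C1_nonneg
  by_cases hvD : v ∈ D
  swap
  · rw [hG.1 w v (Or.inr hvD)]; exact C1_nonneg
  have hl2 : 0 < Real.log 2 := Real.log_pos (by norm_num)
  have hpi := Real.pi_pos
  set C : ℝ := (Real.pi / 2) / Real.log 2 with hC
  have hCpos : 0 < C := by positivity
  have hCl : C * Real.log 2 = Real.pi / 2 := by rw [hC]; field_simp
  set t : ℝ := 2 * ((m:ℝ) + 2) with ht
  have hmr : (0:ℝ) ≤ m := by exact_mod_cast hm
  have hes : (e1:ℝ)^2 + (e2:ℝ)^2 = 1 := by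
    rcases he with h | h | h | h <;> rw [h.1, h.2] <;> norm_num
  -- lower bound on inner products for D and its neighbours
  have hin : ∀ y : Vtx, ((-m - 1 : ℤ)) ≤ (y.1 - v.1) * e1 + (y.2 - v.2) * e2 →
      -(m:ℝ) - 1 ≤ (y.1 - v.1 : ℝ) * e1 + (y.2 - v.2 : ℝ) * e2 := by
    intro y hy; exact_mod_cast hy
  have hbig : ∀ y : Vtx, ((-m - 1 : ℤ)) ≤ (y.1 - v.1) * e1 + (y.2 - v.2) * e2 →
      9 ≤ ((y.1 - v.1 : ℝ) + t * e1)^2 + ((y.2 - v.2 : ℝ) + t * e2)^2 := by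
    intro y hy
    have h := hin y hy
    set s := (y.1 - v.1 : ℝ) * e1 + (y.2 - v.2 : ℝ) * e2 with hs
    have hst : 3 ≤ s + t := by rw [ht]; linarith
    have : (s + t)^2 ≤ (((y.1 - v.1 : ℝ) + t * e1)^2 + ((y.2 - v.2 : ℝ) + t * e2)^2) := by
      have e : s + t = ((y.1 - v.1 : ℝ) + t * e1) * e1 + ((y.2 - v.2 : ℝ) + t * e2) * e2 := by
        rw [hs]; linear_combination (-t) * hes
      rw [e]
      generalize ((y.1 - v.1 : ℝ) + t * e1) = a
      generalize ((y.2 - v.2 : ℝ) + t * e2) = b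
      have : (a * e1 + b * e2)^2 + (a * e2 - b * e1)^2 = a^2+b^2 := by
        linear_combination (a^2+b^2) * hes
      nlinarith [sq_nonneg (a * e2 - b * e1)]
    nlinarith
  have hmain : ∀ w ∈ D, (fun z => G z v - C * Bf v e1 e2 t z) w ≤ 0 := by
    apply maxp_nb
    · intro x hx
      rw [avg4_sub, avg4_smul, hG.2 v hvD x hx]
      have hx' : -m - 1 ≤ (x.1 - v.1) * e1 + (x.2 - v.2) * e2 := by linarith [hD x hx]
      have hb := hbig x hx'
      by_cases hxv : x = v
      · subst hxv
        have := Bf_super_v x e1 e2 t (by simpa using hb)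
        simp only [if_true]
        nlinarith
      · have := Bf_super v e1 e2 t x hb
        simp only [hxv, if_false]
        nlinarith
    · intro x hx y hy hyD
      rw [hG.1 y v (Or.inl hyD)]
      have hx' := hD x hx
      have hy' : -m - 1 ≤ (y.1 - v.1) * e1 + (y.2 - v.2) * e2 := by
        rcases he with ⟨h1, h2⟩ | ⟨h1, h2⟩ | ⟨h1, h2⟩ | ⟨h1, h2⟩ <;> rw [h1, h2] at hx' ⊢ <;>
        rcases hy with h | h | h | h <;> rw [h] <;> simp only <;> linarith
      have hin' := hin y hy'
      have : 0 ≤ Bf v e1 e2 t y := by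
        unfold Bf
        rw [sub_nonneg]
        apply Real.log_le_log (by positivity)
        have e : ((y.1 - v.1 : ℝ) + t * e1)^2 + ((y.2 - v.2 : ℝ) + t * e2)^2
           = (y.1 - v.1 : ℝ)^2 + (y.2 - v.2 : ℝ)^2 + t * (2 * ((y.1 - v.1 : ℝ) * e1 + (y.2 - v.2 : ℝ) * e2) + t) := by
          linear_combination t^2 * hes
        rw [e]
        have h2 : 2 ≤ 2 * ((y.1 - v.1 : ℝ) * e1 + (y.2 - v.2 : ℝ) * e2) + t := by rw [ht]; linarith
        have h4 : 4 ≤ t := by rw [ht]; linarith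
        nlinarith
      nlinarith
  have h1 : G w v ≤ C * Bf v e1 e2 t w := by have := hmain w hwD; simp only at this; linarith
  refine h1.trans ?_
  unfold C1
  apply mul_le_mul_of_nonneg_left _ hCpos.le
  unfold Bf
  have hb := hbig w (by linarith [hD w hwD])
  have hwr : (m:ℝ)^2 ≤ (w.1 - v.1 : ℝ)^2 + (w.2 - v.2 : ℝ)^2 := by
    rcases hw with h | h
    · have : (m:ℝ) ≤ |(w.1 - v.1 : ℝ)| := by exact_mod_cast h
      nlinarith [sq_abs (w.1 - v.1 : ℝ), sq_nonneg (w.2 - v.2 : ℝ)]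
    · have : (m:ℝ) ≤ |(w.2 - v.2 : ℝ)| := by exact_mod_cast h
      nlinarith [sq_abs (w.2 - v.2 : ℝ), sq_nonneg (w.1 - v.1 : ℝ)]
  rw [← Real.log_div (by linarith) (by positivity)]
  apply Real.log_le_log
  · apply div_pos (by linarith) (by positivity)
  rw [div_le_iff₀ (by positivity)]
  exact barrier_final _ _ _ _ _ _ hes hmr ht hwr

end PT2

noncomputable section PT3

lemma dir_self (D : Finset Vtx) (f : Vtx → ℝ) (h : ∀ x ∈ D, f x = avg4 f x) : dir D f = f :=
  dir_uniq D f f (fun _ _ => rfl) h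

/-- `gr D = G - dir_D G` for `D ⊆ E`. -/
lemma gr_eq {D E : Finset Vtx} (hDE : D ⊆ E) {G} (hG : IsGr E G) (x y : Vtx) :
    gr D x y = G x y - dir D (fun z => G z y) x := by
  have : IsGr D (fun x y => G x y - dir D (fun z => G z y) x) := by
    constructor
    · rintro x y h
      by_cases hx : x ∈ D
      · have hy : y ∉ D := by tauto
        have : dir D (fun z => G z y) = fun z => G z y := by
          apply dir_self
          intro z hz
          by_cases hyE : y ∈ E
          · rw [hG.2 y hyE z (hDE hz)]
            have : z ≠ y := fun e => hy (e ▸ hz)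
            simp [this]
          · simp [hG.1 _ y (Or.inr hyE), avg4]
        beta_reduce
        rw [this, sub_self]
      · beta_reduce
        rw [dir_off D _ hx, sub_self]
    · intro y hy x hx
      beta_reduce
      rw [avg4_sub, ← dir_on D _ hx, hG.2 y (hDE hy) x (hDE hx)]; ring
  rw [(gr_spec D).uniq this]

lemma gr_symm (D : Finset Vtx) (x y) : gr D x y = gr D y x := (gr_spec D).symm x y

lemma sum_pk_G {D E L : Finset Vtx} (hDE : D ⊆ E) (hEL : E ⊆ L) {G} (hG : IsGr E G) (x y) :
    ∑ w ∈ L, pk D x w * G w y = G x y - gr D x y := by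
  rw [gr_eq hDE hG, dir_eq_sum D L (fun z => G z y)
    (fun z hz => hG.1 z y (Or.inl fun h => hz (hEL h)))]
  ring

lemma sum_pk_gr {D L : Finset Vtx} (hDL : D ⊆ L) (x y) :
    ∑ w ∈ L, pk D x w * gr D w y = 0 := by
  rw [sum_pk_G (Finset.Subset.refl D) hDL (gr_spec D), sub_self]

lemma pk_G_pk {D E L : Finset Vtx} (hDE : D ⊆ E) (hEL : E ⊆ L) {G} (hG : IsGr E G) (x y) :
    Q L G (pk D x) (pk D y) = G x y - gr D x y := by
  have h1 : Q L G (pk D x) (pk D y) = ∑ z ∈ L, pk D y z * (∑ w ∈ L, pk D x w * G w z) := by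
    unfold Q
    rw [Finset.sum_comm]
    refine Finset.sum_congr rfl fun z _ => ?_
    rw [Finset.mul_sum]
    exact Finset.sum_congr rfl fun w _ => by ring
  rw [h1]
  have h2 : ∀ z ∈ L, pk D y z * (∑ w ∈ L, pk D x w * G w z) = pk D y z * G z x - pk D y z * gr D z x := by
    intro z _
    rw [sum_pk_G hDE hEL hG, hG.symm x z, gr_symm D x z]; ring
  rw [Finset.sum_congr rfl h2, Finset.sum_sub_distrib, sum_pk_G hDE hEL hG,
    sum_pk_gr (hDE.trans hEL), sub_zero, hG.symm y x, gr_symm D y x]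

/-! algebra of Q -/
lemma Q_add_left (L G a a' b) : Q L G (fun w => a w + a' w) b = Q L G a b + Q L G a' b := by
  simp only [Q, add_mul, Finset.sum_add_distrib]
lemma Q_add_right (L G a b b') : Q L G a (fun w => b w + b' w) = Q L G a b + Q L G a b' := by
  simp only [Q, mul_add, add_mul, Finset.sum_add_distrib]
lemma Q_sub_left (L G a a' b) : Q L G (fun w => a w - a' w) b = Q L G a b - Q L G a' b := by
  simp only [Q, sub_mul, Finset.sum_sub_distrib]
lemma Q_sub_right (L G a b b') : Q L G a (fun w => b w - b' w) = Q L G a b - Q L G a b' := by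
  simp only [Q, mul_sub, sub_mul, Finset.sum_sub_distrib]
lemma Q_sum_left {ι : Type*} (L G) (s : Finset ι) (c : ι → ℝ) (a : ι → Vtx → ℝ) (b) :
    Q L G (fun w => ∑ i ∈ s, c i * a i w) b = ∑ i ∈ s, c i * Q L G (a i) b := by
  unfold Q
  simp only [Finset.sum_mul, Finset.mul_sum]
  calc _ = ∑ x ∈ L, ∑ i ∈ s, ∑ y ∈ L, c i * a i x * b y * G x y :=
        Finset.sum_congr rfl fun x _ => Finset.sum_comm
    _ = ∑ i ∈ s, ∑ x ∈ L, ∑ y ∈ L, c i * a i x * b y * G x y := Finset.sum_comm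
    _ = _ := Finset.sum_congr rfl fun i _ => Finset.sum_congr rfl fun x _ =>
        Finset.sum_congr rfl fun y _ => by ring
lemma Q_symm {L G} (hG : ∀ x y, G x y = G y x) (a b) : Q L G a b = Q L G b a := by
  unfold Q
  rw [Finset.sum_comm]
  exact Finset.sum_congr rfl fun y _ => Finset.sum_congr rfl fun x _ => by rw [hG x y]; ring
lemma Q_sum_right {ι : Type*} {L G} (hG : ∀ x y, G x y = G y x) (s : Finset ι) (c : ι → ℝ)
    (b : ι → Vtx → ℝ) (a) :
    Q L G a (fun w => ∑ i ∈ s, c i * b i w) = ∑ i ∈ s, c i * Q L G a (b i) := by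
  rw [Q_symm hG, Q_sum_left]
  exact Finset.sum_congr rfl fun i _ => by rw [Q_symm hG]

lemma Q_diff_le {L G} (hG : ∀ x y, G x y = G y x) (hp : ∀ a, 0 ≤ Q L G a a) (a b) :
    Q L G a b ≤ (Q L G a a + Q L G b b) / 2 := by
  have := hp (fun w => a w - b w)
  rw [Q_sub_left, Q_sub_right, Q_sub_right, Q_symm hG b a] at this
  linarith

lemma Q_sub_le {L G} (hG : ∀ x y, G x y = G y x) (hp : ∀ a, 0 ≤ Q L G a a) (a b) :
    Q L G (fun w => a w - b w) (fun w => a w - b w) ≤ 2 * Q L G a a + 2 * Q L G b b := by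
  have := hp (fun w => a w + b w)
  rw [Q_add_left, Q_add_right, Q_add_right, Q_symm hG b a] at this
  rw [Q_sub_left, Q_sub_right, Q_sub_right, Q_symm hG b a]
  linarith

lemma Q_sum_le {ι : Type*} {L G} (hG : ∀ x y, G x y = G y x) (hp : ∀ a, 0 ≤ Q L G a a)
    (s : Finset ι) (c : ι → ℝ) (a : ι → Vtx → ℝ) (B : ℝ)
    (hB : ∀ i ∈ s, Q L G (a i) (a i) ≤ B) :
    Q L G (fun w => ∑ i ∈ s, c i * a i w) (fun w => ∑ i ∈ s, c i * a i w)
      ≤ (∑ i ∈ s, |c i|)^2 * B := by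
  rw [Q_sum_left]
  have : ∀ i ∈ s, ∀ j ∈ s, c i * (c j * Q L G (a i) (a j)) ≤ |c i| * |c j| * B := by
    intro i hi j hj
    have h1 := Q_diff_le hG hp (a i) (a j)
    have h2 := hp (fun w => a i w + a j w)
    rw [Q_add_left, Q_add_right, Q_add_right, Q_symm hG (a j) (a i)] at h2
    have h3 : |Q L G (a i) (a j)| ≤ B := by
      rw [abs_le]; constructor <;> linarith [hB i hi, hB j hj]
    calc c i * (c j * Q L G (a i) (a j)) ≤ |c i * (c j * Q L G (a i) (a j))| := le_abs_self _
      _ = |c i| * |c j| * |Q L G (a i) (a j)| := by rw [abs_mul, abs_mul]; ring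
      _ ≤ _ := by gcongr
  calc ∑ i ∈ s, c i * Q L G (a i) (fun w => ∑ i ∈ s, c i * a i w)
      = ∑ i ∈ s, ∑ j ∈ s, c i * (c j * Q L G (a i) (a j)) := by
        refine Finset.sum_congr rfl fun i _ => ?_
        rw [Q_sum_right hG, Finset.mul_sum]
    _ ≤ ∑ i ∈ s, ∑ j ∈ s, |c i| * |c j| * B :=
        Finset.sum_le_sum fun i hi => Finset.sum_le_sum fun j hj => this i hi j hj
    _ = _ := by
        rw [pow_two, Finset.sum_mul_sum, Finset.sum_mul]
        exact Finset.sum_congr rfl fun i _ => by rw [Finset.sum_mul]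

/-- harmonic part of a functional -/
def hp (L D : Finset Vtx) (a : Vtx → ℝ) (w : Vtx) : ℝ := ∑ x ∈ L, a x * pk D x w

lemma Q_hp_hp {D E L : Finset Vtx} (hDE : D ⊆ E) (hEL : E ⊆ L) {G} (hG : IsGr E G) (a b) :
    Q L G (hp L D a) (hp L D b) = Q L G a b - Q L (gr D) a b := by
  unfold hp
  rw [Q_sum_left]
  simp only [Q_sum_right hG.symm, pk_G_pk hDE hEL hG]
  simp only [Q, ← Finset.sum_sub_distrib, Finset.mul_sum]
  exact Finset.sum_congr rfl fun x _ => Finset.sum_congr rfl fun y _ => by ring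

lemma Q_hp {D E L : Finset Vtx} (hDE : D ⊆ E) (hEL : E ⊆ L) {G} (hG : IsGr E G) (a b) :
    Q L G (hp L D a) b = Q L G a b - Q L (gr D) a b := by
  unfold hp
  rw [Q_sum_left]
  have : ∀ x, Q L G (pk D x) b = ∑ y ∈ L, b y * (G x y - gr D x y) := by
    intro x
    unfold Q
    rw [Finset.sum_comm]
    refine Finset.sum_congr rfl fun y _ => ?_
    rw [← sum_pk_G hDE hEL hG, Finset.mul_sum]
    exact Finset.sum_congr rfl fun w _ => by ring
  simp only [this]
  simp only [Q, ← Finset.sum_sub_distrib, Finset.mul_sum]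
  exact Finset.sum_congr rfl fun x _ => Finset.sum_congr rfl fun y _ => by ring

/-- residual functional -/
def rs (L D : Finset Vtx) (a : Vtx → ℝ) (w : Vtx) : ℝ := a w - hp L D a w

lemma Q_rs_rs {D E L : Finset Vtx} (hDE : D ⊆ E) (hEL : E ⊆ L) {G} (hG : IsGr E G) (a b) :
    Q L G (rs L D a) (rs L D b) = Q L (gr D) a b := by
  have hs := hG.symm
  unfold rs
  rw [Q_sub_left, Q_sub_right, Q_sub_right, Q_hp_hp hDE hEL hG, Q_hp hDE hEL hG,
    Q_symm hs a (hp L D b), Q_hp hDE hEL hG, Q_symm hs b a, Q_symm (gr_symm D) b a]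
  ring

/-! translations -/
def sh (h : Vtx) (D : Finset Vtx) : Finset Vtx := D.image (· + h)
lemma mem_sh {h x : Vtx} {D : Finset Vtx} : x + h ∈ sh h D ↔ x ∈ D := by
  simp [sh]
lemma avg4_sh (f : Vtx → ℝ) (h x : Vtx) : avg4 f (x + h) = avg4 (fun z => f (z + h)) x := by
  simp only [avg4_eq]
  simp only [add_right_comm]

lemma dir_sh (D : Finset Vtx) (h : Vtx) (f : Vtx → ℝ) (x) :
    dir (sh h D) f (x + h) = dir D (fun z => f (z + h)) x := by
  have : dir D (fun z => f (z + h)) = fun z => dir (sh h D) f (z + h) := by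
    apply dir_uniq
    · intro x hx; exact dir_off _ _ (fun h' => hx (mem_sh.1 h'))
    · intro x hx
      rw [dir_on _ _ (mem_sh.2 hx), avg4_sh]
  rw [this]

lemma pk_sh (D : Finset Vtx) (h v w : Vtx) : pk (sh h D) (v + h) (w + h) = pk D v w := by
  unfold pk
  rw [dir_sh]
  have : (fun z => (Pi.single (w+h) 1 : Vtx → ℝ) (z+h)) = Pi.single w 1 := by
    funext z; simp [Pi.single_apply]
  rw [this]

lemma gr_sh (D : Finset Vtx) (h x y : Vtx) : gr (sh h D) (x + h) (y + h) = gr D x y := by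
  have : IsGr D (fun x y => gr (sh h D) (x + h) (y + h)) := by
    constructor
    · intro x y hxy
      apply (gr_spec (sh h D)).1
      simpa [mem_sh] using hxy
    · intro y hy x hx
      beta_reduce
      rw [(gr_spec (sh h D)).2 (y+h) (mem_sh.2 hy) (x+h) (mem_sh.2 hx), avg4_sh]
      simp
  rw [(gr_spec D).uniq this]

lemma Q_restrict {D L : Finset Vtx} (hDL : D ⊆ L) {G} (hG : IsGr D G) (a b) : Q L G a b = Q D G a b := by
  unfold Q
  rw [← Finset.sum_subset hDL (fun x _ hx => Finset.sum_eq_zero fun y _ => by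
    simp [hG.1 x y (Or.inl hx)])]
  refine Finset.sum_congr rfl fun x _ => ?_
  rw [← Finset.sum_subset hDL (fun y _ hy => by simp [hG.1 x y (Or.inr hy)])]

lemma Q_sh {D L : Finset Vtx} (h : Vtx) (hDL : D ⊆ L) (hDL' : sh h D ⊆ L) (a b a' b' : Vtx → ℝ)
    (ha : ∀ w, a' (w + h) = a w) (hb : ∀ w, b' (w + h) = b w) :
    Q L (gr (sh h D)) a' b' = Q L (gr D) a b := by
  rw [Q_restrict hDL' (gr_spec _), Q_restrict hDL (gr_spec _)]
  unfold Q
  have hinj : Set.InjOn (· + h) (D : Set Vtx) := fun a _ b _ h => by simpa using h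
  conv_lhs => rw [sh]
  rw [Finset.sum_image hinj]
  refine Finset.sum_congr rfl fun x _ => ?_
  rw [Finset.sum_image hinj]
  refine Finset.sum_congr rfl fun y _ => ?_
  rw [ha, hb]
  congr 1
  exact gr_sh D h x y

/-! boxes -/
def bx (m : ℤ) (v : Vtx) : Finset Vtx := Finset.Ioo (v.1 - m) (v.1 + m) ×ˢ Finset.Ioo (v.2 - m) (v.2 + m)
lemma mem_bx {m : ℤ} {v w : Vtx} : w ∈ bx m v ↔
    (v.1 - m < w.1 ∧ w.1 < v.1 + m) ∧ (v.2 - m < w.2 ∧ w.2 < v.2 + m) := by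
  simp [bx]
lemma not_mem_bx {m : ℤ} {v w : Vtx} (h : w ∉ bx m v) : m ≤ |w.1 - v.1| ∨ m ≤ |w.2 - v.2| := by
  rw [mem_bx] at h
  rw [le_abs, le_abs]; omega

lemma bx_sh (m : ℤ) (v h : Vtx) : bx m (v + h) = sh h (bx m v) := by
  ext w
  obtain ⟨z, rfl⟩ : ∃ z, w = z + h := ⟨w - h, by simp⟩
  rw [mem_sh, mem_bx, mem_bx]; simp only [Prod.fst_add, Prod.snd_add]; omega

/-- full functional -/
def Tf (M : ℕ) (c : ℕ → ℝ) (m : ℕ → ℤ) (v w : Vtx) : ℝ := ∑ i ∈ Finset.Icc 1 M, c i * pk (bx (m i) v) v w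
/-- truncated functional -/
def Tt (E : Finset Vtx) (M : ℕ) (c : ℕ → ℝ) (m : ℕ → ℤ) (v w : Vtx) : ℝ :=
  ∑ i ∈ Finset.Icc 1 M, c i * pk (bx (m i) v ∩ E) v w

lemma Tf_sh (M c m v h w) : Tf M c m (v + h) (w + h) = Tf M c m v w := by
  unfold Tf
  simp only [bx_sh, pk_sh]

structure GeoV (E : Finset Vtx) (M : ℕ) (m : ℕ → ℤ) (h v : Vtx) : Prop where
  g1 : ∀ i ∈ Finset.Icc 1 M, bx (m i) (v + h) ⊆ E
  g2 : ∃ e1 e2 k : ℤ, unitv e1 e2 ∧ 0 ≤ k ∧ (∀ w ∈ E, -k ≤ (w.1 - v.1) * e1 + (w.2 - v.2) * e2) ∧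
    ∀ w ∈ E, w + h ∉ E → k ≤ |w.1 - v.1| ∨ k ≤ |w.2 - v.2|
  g3 : ∀ i ∈ Finset.Icc 1 M, bx (m i) v ⊆ E ∨
    (0 ≤ m i ∧ ∃ e1 e2 : ℤ, unitv e1 e2 ∧ ∀ w ∈ E, -(m i) ≤ (w.1 - v.1) * e1 + (w.2 - v.2) * e2)

def Dp (E : Finset Vtx) (h : Vtx) : Finset Vtx := E.filter (fun w => w + h ∈ E)

lemma var_z {E L : Finset Vtx} (hEL : E ⊆ L) {G} (hG : IsGr E G) {M : ℕ} {m : ℕ → ℤ} {h v : Vtx}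
    (hg : GeoV E M m h v) (i) (hi : i ∈ Finset.Icc 1 M) :
    Q L G (fun w => pk (bx (m i) v ∩ E) v w - rs L (Dp E h) (pk (bx (m i) v) v) w)
      (fun w => pk (bx (m i) v ∩ E) v w - rs L (Dp E h) (pk (bx (m i) v) v) w) ≤ 4 * C1 := by
  have hDE : Dp E h ⊆ E := Finset.filter_subset _ _
  have hpsd := hG.psd L hEL
  by_cases hin : bx (m i) v ⊆ E
  · have hin' : bx (m i) v ⊆ Dp E h := by
      intro w hw
      refine Finset.mem_filter.2 ⟨hin hw, hg.g1 i hi ?_⟩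
      rw [bx_sh, mem_sh]; exact hw
    have hz : ∀ w ∈ L, pk (bx (m i) v ∩ E) v w - rs L (Dp E h) (pk (bx (m i) v) v) w = pk (Dp E h) v w := by
      intro w hw
      rw [Finset.inter_eq_left.2 hin]
      unfold rs
      rw [sub_sub_cancel]
      unfold hp
      rw [← dir_eq_sum (bx (m i) v) L (fun x => pk (Dp E h) x w), dir_self]
      · intro x hx; exact dir_on _ _ (hin' hx)
      · intro x hx
        unfold pk
        rw [dir_off _ _ (fun hx' => hx (hEL (hDE hx')))]
        have : x ≠ w := fun e => hx (e ▸ hw)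
        simp [Pi.single_eq_of_ne this]
    have : Q L G (fun w => pk (bx (m i) v ∩ E) v w - rs L (Dp E h) (pk (bx (m i) v) v) w)
      (fun w => pk (bx (m i) v ∩ E) v w - rs L (Dp E h) (pk (bx (m i) v) v) w)
        = Q L G (pk (Dp E h) v) (pk (Dp E h) v) := by
      unfold Q
      exact Finset.sum_congr rfl fun x hx => Finset.sum_congr rfl fun y hy => by beta_reduce; rw [hz x hx, hz y hy]
    rw [this, pk_G_pk hDE hEL hG, gr_eq hDE hG]
    have : dir (Dp E h) (fun z => G z v) v ≤ C1 := by
      apply dir_le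
      intro x hx
      obtain ⟨e1, e2, k, he, hk, h1, h2⟩ := hg.g2
      by_cases hxE : x ∈ E
      · exact green_barrier hG v e1 e2 he k hk h1 x (h2 x hxE (fun h' => hx (Finset.mem_filter.2 ⟨hxE, h'⟩)))
      · rw [hG.1 x v (Or.inl hxE)]; exact C1_nonneg
    linarith [C1_nonneg]
  · obtain ⟨hm, e1, e2, he, h1⟩ := (hg.g3 i hi).resolve_left hin
    refine (Q_sub_le hG.symm hpsd (pk (bx (m i) v ∩ E) v) (rs L (Dp E h) (pk (bx (m i) v) v))).trans ?_
    have b1 : Q L G (pk (bx (m i) v ∩ E) v) (pk (bx (m i) v ∩ E) v) ≤ C1 := by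
      have hs : bx (m i) v ∩ E ⊆ E := Finset.inter_subset_right
      rw [pk_G_pk hs hEL hG, gr_eq hs hG]
      have : dir (bx (m i) v ∩ E) (fun z => G z v) v ≤ C1 := by
        apply dir_le
        intro x hx
        by_cases hxE : x ∈ E
        · exact green_barrier hG v e1 e2 he (m i) hm h1 x (not_mem_bx fun h' => hx (Finset.mem_inter.2 ⟨h', hxE⟩))
        · rw [hG.1 x v (Or.inl hxE)]; exact C1_nonneg
      linarith
    have b2 : Q L G (rs L (Dp E h) (pk (bx (m i) v) v)) (rs L (Dp E h) (pk (bx (m i) v) v)) ≤ C1 := by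
      rw [Q_rs_rs hDE hEL hG]
      set W := Dp E h ∪ bx (m i) v with hW
      have hDW : Dp E h ⊆ W := Finset.subset_union_left
      have hBW : bx (m i) v ⊆ W := Finset.subset_union_right
      have s1 : Q L (gr (Dp E h)) (pk (bx (m i) v) v) (pk (bx (m i) v) v)
          ≤ Q W (gr W) (pk (bx (m i) v) v) (pk (bx (m i) v) v) := by
        rw [Q_restrict (hDE.trans hEL) (gr_spec _), ← Q_restrict hDW (gr_spec (Dp E h))]
        unfold Q
        refine Finset.sum_le_sum fun x _ => Finset.sum_le_sum fun y _ => ?_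
        exact mul_le_mul_of_nonneg_left ((gr_spec (Dp E h)).mono hDW (gr_spec W) x y)
          (mul_nonneg (pk_nonneg _ _ _) (pk_nonneg _ _ _))
      refine s1.trans ?_
      rw [pk_G_pk hBW (Finset.Subset.refl W) (gr_spec W), gr_eq hBW (gr_spec W)]
      have : dir (bx (m i) v) (fun z => gr W z v) v ≤ C1 := by
        apply dir_le
        intro x hx
        refine green_barrier (gr_spec W) v e1 e2 he (m i) hm ?_ x (not_mem_bx hx)
        intro w hw
        rcases Finset.mem_union.1 hw with hw | hw
        · exact h1 w (hDE hw)
        · rw [mem_bx] at hw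
          rcases he with ⟨a, b⟩ | ⟨a, b⟩ | ⟨a, b⟩ | ⟨a, b⟩ <;> rw [a, b] <;> linarith [hw.1.1, hw.1.2, hw.2.1, hw.2.2]
      linarith
    linarith

/-- Main covariance comparison. -/
lemma cov_compare {E L : Finset Vtx} (hEL : E ⊆ L) {G} (hG : IsGr E G) {M : ℕ} (c : ℕ → ℝ) {m : ℕ → ℤ}
    (S : Finset Vtx) (h : Vtx) (hg : ∀ v ∈ S, GeoV E M m h v) :
    ∃ y r : Vtx → Vtx → ℝ,
      (∀ u ∈ S, ∀ v ∈ S, Q L G (Tt E M c m (u + h)) (Tt E M c m (v + h))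
        = Q L G (y u) (y v) + Q L G (r u) (r v)) ∧
      (∀ v ∈ S, Q L G (fun w => Tt E M c m v w - y v w) (fun w => Tt E M c m v w - y v w)
        ≤ (∑ i ∈ Finset.Icc 1 M, |c i|)^2 * (4 * C1)) := by
  have hDE : Dp E h ⊆ E := Finset.filter_subset _ _
  have hDE' : sh h (Dp E h) ⊆ E := by
    intro w hw
    obtain ⟨z, hz, rfl⟩ := Finset.mem_image.1 hw
    exact (Finset.mem_filter.1 hz).2
  refine ⟨fun v => rs L (Dp E h) (Tf M c m v), fun v => hp L (sh h (Dp E h)) (Tf M c m (v + h)), ?_, ?_⟩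
  · intro u hu v hv
    have e : ∀ v ∈ S, Tt E M c m (v + h) = Tf M c m (v + h) := by
      intro v hv
      funext w
      unfold Tt Tf
      exact Finset.sum_congr rfl fun i hi => by rw [Finset.inter_eq_left.2 ((hg v hv).g1 i hi)]
    rw [e u hu, e v hv, Q_rs_rs hDE hEL hG, Q_hp_hp hDE' hEL hG,
      Q_sh h (hDE.trans hEL) (hDE'.trans hEL) (Tf M c m u) (Tf M c m v) _ _ (Tf_sh M c m u h) (Tf_sh M c m v h)]
    ring
  · intro v hv
    have e : (fun w => Tt E M c m v w - rs L (Dp E h) (Tf M c m v) w)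
      = fun w => ∑ i ∈ Finset.Icc 1 M, c i * (pk (bx (m i) v ∩ E) v w - rs L (Dp E h) (pk (bx (m i) v) v) w) := by
      funext w
      have : rs L (Dp E h) (Tf M c m v) w = ∑ i ∈ Finset.Icc 1 M, c i * rs L (Dp E h) (pk (bx (m i) v) v) w := by
        unfold rs hp Tf
        simp only [mul_sub, Finset.sum_sub_distrib, Finset.sum_mul, Finset.mul_sum]
        congr 1
        rw [Finset.sum_comm]
        exact Finset.sum_congr rfl fun i _ => Finset.sum_congr rfl fun x _ => by ring
      rw [this]
      unfold Tt
      rw [← Finset.sum_sub_distrib]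
      exact Finset.sum_congr rfl fun i _ => by ring
    rw [e]
    exact Q_sum_le hG.symm (hG.psd L hEL) _ _ _ _ (fun i hi => var_z hEL hG (hg v hv) i hi)

end PT3

noncomputable section PT4
open MeasureTheory ProbabilityTheory

lemma Q_smul (L G) (s t : ℝ) (a b) : Q L G (fun w => s * a w) (fun w => t * b w) = s * t * Q L G a b := by
  unfold Q
  rw [Finset.mul_sum]
  refine Finset.sum_congr rfl fun x _ => ?_
  rw [Finset.mul_sum]
  exact Finset.sum_congr rfl fun y _ => by ring

def lin (L : Finset Vtx) (c : Vtx → ℝ) (ω : FieldSp) : ℝ := ∑ v ∈ L, c v * ω v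

structure GS (P : Measure FieldSp) (L : Finset Vtx) (G : Vtx → Vtx → ℝ) : Prop where
  prob : IsProbabilityMeasure P
  sy : ∀ x y, G x y = G y x
  psd : ∀ a, 0 ≤ Q L G a a
  law : ∀ c, P.map (lin L c) = gaussianReal 0 (Real.toNNReal (Q L G c c))

@[fun_prop]
lemma measurable_lin (L c) : Measurable (lin L c) := by
  unfold lin
  exact Finset.measurable_sum _ (fun v _ => (measurable_pi_apply v).const_mul _)

variable {P : Measure FieldSp} {L : Finset Vtx} {G : Vtx → Vtx → ℝ}

lemma GS.memLp (h : GS P L G) (c) (p : ENNReal) (hp : p ≠ ⊤) : MemLp (lin L c) p P := by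
  have := memLp_id_gaussianReal' (μ := 0) (v := Real.toNNReal (Q L G c c)) p hp
  rw [← h.law c, memLp_map_measure_iff (by fun_prop) (by fun_prop)] at this
  exact this

lemma GS.integrable (h : GS P L G) (c) : Integrable (lin L c) P :=
  memLp_one_iff_integrable.1 (h.memLp c 1 (by simp))

lemma GS.mean (h : GS P L G) (c) : ∫ ω, lin L c ω ∂P = 0 := by
  have := integral_id_gaussianReal (μ := 0) (v := Real.toNNReal (Q L G c c))
  rw [← h.law c, integral_map (by fun_prop) (by fun_prop)] at this
  exact this

lemma GS.sq (h : GS P L G) (c) : ∫ ω, lin L c ω ^ 2 ∂P = Q L G c c := by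
  have := variance_fun_id_gaussianReal (μ := 0) (v := Real.toNNReal (Q L G c c))
  rw [variance_eq_integral (by fun_prop)] at this
  simp only [integral_id_gaussianReal, sub_zero] at this
  rw [← h.law c, integral_map (by fun_prop) (by fun_prop)] at this
  rw [this, Real.coe_toNNReal _ (h.psd c)]

lemma GS.int_sq (h : GS P L G) (c) : Integrable (fun ω => lin L c ω ^ 2) P :=
  (h.memLp c 2 (by simp)).integrable_sq

lemma GS.mgf (h : GS P L G) (c) (t : ℝ) : ∫ ω, Real.exp (t * lin L c ω) ∂P = Real.exp (Q L G c c * t ^ 2 / 2) := by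
  have := mgf_gaussianReal (h.law c) t
  rw [ProbabilityTheory.mgf, Real.coe_toNNReal _ (h.psd c)] at this
  simpa using this

lemma GS.int_exp (h : GS P L G) (c) (t : ℝ) : Integrable (fun ω => Real.exp (t * lin L c ω)) P := by
  have := integrable_exp_mul_gaussianReal (μ := 0) (v := Real.toNNReal (Q L G c c)) t
  rw [← h.law c] at this
  exact (integrable_map_measure (f := lin L c) (g := fun x => Real.exp (t * x)) (by fun_prop) (by fun_prop)).1 this

lemma GS.abs_le (h : GS P L G) (c) (s : ℝ) (hs : 0 < s) (hc : Q L G c c ≤ s ^ 2) :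
    ∫ ω, |lin L c ω| ∂P ≤ s := by
  have := h.prob
  have h1 : ∀ ω, |lin L c ω| ≤ s / 2 + lin L c ω ^ 2 * (1 / (2 * s)) := by
    intro ω
    have : s / 2 + lin L c ω ^ 2 * (1 / (2 * s)) - |lin L c ω| = (|lin L c ω| - s) ^ 2 / (2 * s) := by
      rw [← sq_abs (lin L c ω)]; field_simp; ring
    have : 0 ≤ (|lin L c ω| - s) ^ 2 / (2 * s) := by positivity
    linarith
  have h2 : ∫ ω, |lin L c ω| ∂P ≤ ∫ ω, (s / 2 + lin L c ω ^ 2 * (1 / (2 * s))) ∂P :=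
    integral_mono (h.integrable c).abs ((integrable_const _).add ((h.int_sq c).mul_const _)) h1
  rw [integral_add (integrable_const _) ((h.int_sq c).mul_const _), integral_mul_const, h.sq] at h2
  simp only [integral_const, probReal_univ, one_smul] at h2
  have : Q L G c c * (1 / (2 * s)) ≤ s ^ 2 * (1 / (2 * s)) := by gcongr
  have e : s ^ 2 * (1 / (2 * s)) = s / 2 := by field_simp
  linarith

lemma GS.law_prod (h : GS P L G) (a b : Vtx → ℝ) :
    (P.prod P).map (fun p : FieldSp × FieldSp => lin L a p.1 + lin L b p.2)
      = gaussianReal 0 (Real.toNNReal (Q L G a a + Q L G b b)) := by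
  have := h.prob
  have hi := indepFun_prod (μ := P) (ν := P) (measurable_lin L a) (measurable_lin L b)
  have h1 : (P.prod P).map (fun p : FieldSp × FieldSp => lin L a p.1) = gaussianReal 0 (Real.toNNReal (Q L G a a)) := by
    rw [← h.law a, ← Function.comp_def, ← Measure.map_map (by fun_prop) measurable_fst]; simp
  have h2 : (P.prod P).map (fun p : FieldSp × FieldSp => lin L b p.2) = gaussianReal 0 (Real.toNNReal (Q L G b b)) := by
    rw [← h.law b, ← Function.comp_def, ← Measure.map_map (by fun_prop) measurable_snd]; simp
  have := gaussianReal_add_gaussianReal_of_indepFun hi h1 h2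
  rw [Real.toNNReal_add (h.psd a) (h.psd b)]
  rw [add_zero] at this
  exact this

lemma lin_sum {κ : Type*} (s : Finset κ) (t : κ → ℝ) (a : κ → Vtx → ℝ) (ω) :
    ∑ k ∈ s, t k * lin L (a k) ω = lin L (fun w => ∑ k ∈ s, t k * a k w) ω := by
  unfold lin
  simp only [Finset.mul_sum, Finset.sum_mul]
  rw [Finset.sum_comm]
  exact Finset.sum_congr rfl fun v _ => Finset.sum_congr rfl fun k _ => by ring

lemma GS.law_eq (h : GS P L G) {κ : Type*} [Fintype κ] (a b a' b' : κ → Vtx → ℝ)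
    (hq : ∀ k l, Q L G (a k) (a l) + Q L G (b k) (b l) = Q L G (a' k) (a' l) + Q L G (b' k) (b' l)) :
    (P.prod P).map (fun (p : FieldSp × FieldSp) k => lin L (a k) p.1 + lin L (b k) p.2)
      = (P.prod P).map (fun (p : FieldSp × FieldSp) k => lin L (a' k) p.1 + lin L (b' k) p.2) := by
  have := h.prob
  have hm : ∀ a b : κ → Vtx → ℝ, Measurable
      (fun (p : FieldSp × FieldSp) k => lin L (a k) p.1 + lin L (b k) p.2) := fun a b => by fun_prop
  have := Measure.isProbabilityMeasure_map (μ := P.prod P) (hm a b).aemeasurable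
  have := Measure.isProbabilityMeasure_map (μ := P.prod P) (hm a' b').aemeasurable
  apply Measure.ext_of_charFunDual
  funext F
  rw [charFunDual_eq_charFun_map_one, charFunDual_eq_charFun_map_one,
    Measure.map_map F.measurable (hm a b), Measure.map_map F.measurable (hm a' b')]
  have key : ∀ a b : κ → Vtx → ℝ, (F ∘ fun (p : FieldSp × FieldSp) k => lin L (a k) p.1 + lin L (b k) p.2)
      = fun p => lin L (fun w => ∑ k, F (Pi.single k 1) * a k w) p.1
        + lin L (fun w => ∑ k, F (Pi.single k 1) * b k w) p.2 := by
    intro a b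
    funext p
    rw [← lin_sum, ← lin_sum, ← Finset.sum_add_distrib]
    simp only [Function.comp]
    conv_lhs => rw [← Finset.univ_sum_single (fun k => lin L (a k) p.1 + lin L (b k) p.2)]
    rw [map_sum]
    refine Finset.sum_congr rfl fun k _ => ?_
    have : Pi.single (M := fun _ => ℝ) k (lin L (a k) p.1 + lin L (b k) p.2)
        = (lin L (a k) p.1 + lin L (b k) p.2) • Pi.single k 1 := by
      rw [← Pi.single_smul]; simp
    rw [this, map_smul, smul_eq_mul]; ring
  rw [key, key, h.law_prod, h.law_prod]
  congr 3
  simp only [Q_sum_left, Q_sum_right h.sy]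
  rw [← Finset.sum_add_distrib, ← Finset.sum_add_distrib]
  refine Finset.sum_congr rfl fun k _ => ?_
  rw [← mul_add, ← mul_add, ← Finset.sum_add_distrib, ← Finset.sum_add_distrib]
  congr 1
  refine Finset.sum_congr rfl fun l _ => ?_
  rw [← mul_add, ← mul_add, hq]

end PT4

noncomputable section PT5
open MeasureTheory ProbabilityTheory

variable {ι : Type*} [Fintype ι]

def zs (x : ι → ℝ) : ℝ := ∑ i, Real.exp (x i)
def lse (x : ι → ℝ) : ℝ := Real.log (zs x)
def pw (x : ι → ℝ) (i : ι) : ℝ := Real.exp (x i) / zs x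

variable [Nonempty ι]

lemma zs_pos (x : ι → ℝ) : 0 < zs x := Finset.sum_pos (fun i _ => Real.exp_pos _) Finset.univ_nonempty
lemma pw_nonneg (x : ι → ℝ) (i) : 0 ≤ pw x i := div_nonneg (Real.exp_pos _).le (zs_pos x).le
lemma pw_sum (x : ι → ℝ) : ∑ i, pw x i = 1 := by
  unfold pw; rw [← Finset.sum_div]; exact div_self (zs_pos x).ne'
lemma pw_le_one (x : ι → ℝ) (i) : pw x i ≤ 1 := by
  rw [← pw_sum x]; exact Finset.single_le_sum (fun j _ => pw_nonneg x j) (Finset.mem_univ i)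

lemma lse_grad (x y : ι → ℝ) : lse x + ∑ i, pw x i * (y i - x i) ≤ lse y := by
  have h := convexOn_exp.map_sum_le (t := Finset.univ) (w := pw x) (p := fun i => y i - x i)
    (fun i _ => pw_nonneg x i) (pw_sum x) (fun i _ => Set.mem_univ _)
  simp only [smul_eq_mul] at h
  have e : ∑ i, pw x i * Real.exp (y i - x i) = zs y / zs x := by
    rw [show zs y / zs x = ∑ i, Real.exp (y i) / zs x by rw [← Finset.sum_div]; rfl]
    unfold pw
    refine Finset.sum_congr rfl fun i _ => ?_
    rw [Real.exp_sub]
    have := (zs_pos x).ne'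
    field_simp
  rw [e] at h
  have h2 := Real.log_le_log (Real.exp_pos _) h
  rw [Real.log_exp, Real.log_div (zs_pos y).ne' (zs_pos x).ne'] at h2
  unfold lse; linarith

lemma lse_lip (x y : ι → ℝ) (a : ℝ) (h : ∀ i, x i ≤ y i + a) : lse x ≤ lse y + a := by
  unfold lse
  have : zs x ≤ zs y * Real.exp a := by
    unfold zs; rw [Finset.sum_mul]
    refine Finset.sum_le_sum fun i _ => ?_
    rw [← Real.exp_add]; exact Real.exp_le_exp.2 (h i)
  have h2 := Real.log_le_log (zs_pos x) this
  rwa [Real.log_mul (zs_pos y).ne' (Real.exp_pos _).ne', Real.log_exp] at h2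

lemma lse_const : lse (fun _ : ι => 0) = Real.log (Fintype.card ι) := by simp [lse, zs]

lemma lse_abs (x : ι → ℝ) : |lse x| ≤ Real.log (Fintype.card ι) + ∑ i, |x i| := by
  have h0 : ∀ i, |x i| ≤ ∑ i, |x i| := fun i => Finset.single_le_sum (f := fun i => |x i|) (fun j _ => abs_nonneg _) (Finset.mem_univ i)
  have h1 := lse_lip x (fun _ => 0) (∑ i, |x i|) (fun i => by linarith [le_abs_self (x i), h0 i])
  have h2 := lse_lip (fun _ => 0) x (∑ i, |x i|) (fun i => by linarith [neg_abs_le (x i), h0 i])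
  rw [lse_const] at h1 h2
  have : 0 ≤ Real.log (Fintype.card ι) := Real.log_natCast_nonneg _
  rw [abs_le]; constructor <;> linarith

lemma le_lse (x : ι → ℝ) (i) : x i ≤ lse x := by
  unfold lse
  rw [Real.le_log_iff_exp_le (zs_pos x)]
  exact Finset.single_le_sum (f := fun i => Real.exp (x i)) (fun j _ => (Real.exp_pos _).le) (Finset.mem_univ i)

@[fun_prop]
lemma measurable_zs : Measurable (zs : (ι → ℝ) → ℝ) := by unfold zs; fun_prop
@[fun_prop]
lemma measurable_lse : Measurable (lse : (ι → ℝ) → ℝ) := by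
  unfold lse; exact Real.measurable_log.comp measurable_zs
@[fun_prop]
lemma measurable_pw (i : ι) : Measurable (fun x : ι → ℝ => pw x i) := by
  unfold pw; exact Measurable.div (by fun_prop) (by fun_prop)

lemma integrable_lse {Ω : Type*} [MeasurableSpace Ω] {μ : Measure Ω} [IsProbabilityMeasure μ] (X : Ω → ι → ℝ)
    (hX : ∀ i, Integrable (fun ω => X ω i) μ) : Integrable (fun ω => lse (X ω)) μ := by
  refine Integrable.mono' (g := fun ω => Real.log (Fintype.card ι) + ∑ i, |X ω i|) ?_ ?_ ?_
  · exact (integrable_const _).add (integrable_finsetSum _ fun i _ => (hX i).abs)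
  · have : AEMeasurable X μ := aemeasurable_pi_lambda _ fun i => (hX i).aemeasurable
    exact (measurable_lse.comp_aemeasurable this).aestronglyMeasurable
  · exact ae_of_all _ fun ω => lse_abs _

variable {P : Measure FieldSp} {L : Finset Vtx} {G : Vtx → Vtx → ℝ}

/-- expected log partition function -/
def EL (P : Measure FieldSp) (L : Finset Vtx) (a : ι → Vtx → ℝ) : ℝ := ∫ ω, lse (fun i => lin L (a i) ω) ∂P

lemma GS.int_lse (h : GS P L G) (a : ι → Vtx → ℝ) : Integrable (fun ω => lse (fun i => lin L (a i) ω)) P := by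
  have := h.prob
  exact integrable_lse _ fun i => h.integrable (a i)

lemma GS.int_fst (h : GS P L G) (a) : Integrable (fun p : FieldSp × FieldSp => lin L a p.1) (P.prod P) := by
  have := h.prob; exact (h.integrable a).comp_fst P
lemma GS.int_snd (h : GS P L G) (a) : Integrable (fun p : FieldSp × FieldSp => lin L a p.2) (P.prod P) := by
  have := h.prob; exact (h.integrable a).comp_snd P

lemma GS.int2 (h : GS P L G) (a b) : Integrable (fun p : FieldSp × FieldSp => lin L a p.1 + lin L b p.2) (P.prod P) :=
  (h.int_fst a).add (h.int_snd b)

lemma GS.int_lse2 (h : GS P L G) (a b : ι → Vtx → ℝ) :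
    Integrable (fun p : FieldSp × FieldSp => lse (fun i => lin L (a i) p.1 + lin L (b i) p.2)) (P.prod P) := by
  have := h.prob
  exact integrable_lse _ fun i => h.int2 (a i) (b i)

lemma lin_zero (ω) : lin L (fun _ => 0) ω = 0 := by simp [lin]
lemma Q_zero : Q L G (fun _ => 0) (fun _ => 0) = 0 := by simp [Q]

lemma GS.EL_prod (h : GS P L G) (a : ι → Vtx → ℝ) :
    ∫ p : FieldSp × FieldSp, lse (fun i => lin L (a i) p.1) ∂(P.prod P) = EL P L a := by
  have := h.prob
  unfold EL
  rw [integral_fun_fst (f := fun ω => lse (fun i => lin L (a i) ω))]; simp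

lemma GS.EL_eq (h : GS P L G) (a b y : ι → Vtx → ℝ)
    (hq : ∀ k l, Q L G (y k) (y l) = Q L G (a k) (a l) + Q L G (b k) (b l)) :
    EL P L y = ∫ p : FieldSp × FieldSp, lse (fun i => lin L (a i) p.1 + lin L (b i) p.2) ∂(P.prod P) := by
  have hl := h.law_eq y (fun _ _ => 0) a b (fun k l => by rw [Q_zero, add_zero, hq])
  simp only [lin_zero, add_zero] at hl
  rw [← h.EL_prod]
  have := integral_map (μ := P.prod P) (φ := fun (p : FieldSp × FieldSp) k => lin L (y k) p.1) (f := lse) (by fun_prop)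
    measurable_lse.aestronglyMeasurable
  rw [← this, hl, integral_map (by fun_prop) measurable_lse.aestronglyMeasurable]

lemma GS.int_pw (h : GS P L G) (x : ι → Vtx → ℝ) (r) (i) :
    Integrable (fun p : FieldSp × FieldSp => pw (fun i => lin L (x i) p.1) i * lin L r p.2) (P.prod P) := by
  have := h.prob
  refine (h.int_snd r).bdd_mul (c := 1) ?_ ?_
  · have : Measurable fun p : FieldSp × FieldSp => pw (fun i => lin L (x i) p.1) i :=
      (measurable_pw i).comp (g := fun x : ι → ℝ => pw x i) (f := fun p : FieldSp × FieldSp => fun i => lin L (x i) p.1) (by fun_prop)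
    exact this.aestronglyMeasurable
  · exact ae_of_all _ fun p => by
      rw [Real.norm_eq_abs, abs_of_nonneg (pw_nonneg _ _)]; exact pw_le_one _ _

/-- B1 -/
lemma GS.EL_mono (h : GS P L G) (y x r : ι → Vtx → ℝ)
    (hq : ∀ k l, Q L G (y k) (y l) = Q L G (x k) (x l) + Q L G (r k) (r l)) : EL P L x ≤ EL P L y := by
  have := h.prob
  rw [h.EL_eq x r y hq, ← h.EL_prod x]
  have hi : ∀ i, Integrable (fun p : FieldSp × FieldSp => pw (fun i => lin L (x i) p.1) i * lin L (r i) p.2) (P.prod P) :=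
    fun i => h.int_pw x (r i) i
  have hz : ∫ p : FieldSp × FieldSp, ∑ i, pw (fun i => lin L (x i) p.1) i * lin L (r i) p.2 ∂(P.prod P) = 0 := by
    rw [integral_finsetSum _ fun i _ => hi i]
    refine Finset.sum_eq_zero fun i _ => ?_
    rw [integral_prod_mul (f := fun ω => pw (fun i => lin L (x i) ω) i) (g := fun ω => lin L (r i) ω), h.mean, mul_zero]
  have h1 : Integrable (fun p : FieldSp × FieldSp => lse (fun i => lin L (x i) p.1)) (P.prod P) :=
    integrable_lse _ fun i => h.int_fst (x i)
  have h2 := integrable_finsetSum Finset.univ fun i _ => hi i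
  have := integral_mono (h1.add h2) (h.int_lse2 x r) (fun p => by
    have := lse_grad (fun i => lin L (x i) p.1) (fun i => lin L (x i) p.1 + lin L (r i) p.2)
    simpa using this)
  rw [integral_add' h1 h2] at this
  rw [hz] at this
  linarith

/-- B3 -/
lemma GS.EL_pert (h : GS P L G) (x y : ι → Vtx → ℝ) (s t : ℝ) (ht : 0 < t)
    (hq : ∀ i, Q L G (fun w => x i w - y i w) (fun w => x i w - y i w) ≤ s) :
    EL P L x ≤ EL P L y + (1 / t) * (Real.log (2 * Fintype.card ι) + s * t ^ 2 / 2) := by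
  have := h.prob
  set K : ℝ := 2 * Fintype.card ι * Real.exp (s * t ^ 2 / 2) with hK
  have hc : (0:ℝ) < Fintype.card ι := by exact_mod_cast Fintype.card_pos
  have hK0 : 0 < K := by positivity
  set d : ι → Vtx → ℝ := fun i w => x i w - y i w with hd
  set W : FieldSp → ℝ := fun ω => ∑ i, (Real.exp (t * lin L (d i) ω) + Real.exp (-t * lin L (d i) ω)) with hW
  have hWi : Integrable W P := integrable_finsetSum _ fun i _ => (h.int_exp _ _).add (h.int_exp _ _)
  have hWp : ∀ ω, 0 < W ω := fun ω => Finset.sum_pos (fun i _ => by positivity) Finset.univ_nonempty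
  have hWE : ∫ ω, W ω ∂P ≤ K := by
    have hii : ∀ i, Integrable (fun ω => Real.exp (t * lin L (d i) ω) + Real.exp (-t * lin L (d i) ω)) P :=
      fun i => (h.int_exp _ _).add (h.int_exp _ _)
    simp only [hW]
    rw [integral_finsetSum _ fun i _ => hii i]
    have : ∀ i ∈ (Finset.univ : Finset ι), ∫ ω, (Real.exp (t * lin L (d i) ω) + Real.exp (-t * lin L (d i) ω)) ∂P
        ≤ 2 * Real.exp (s * t ^ 2 / 2) := by
      intro i _
      rw [integral_add (h.int_exp _ _) (h.int_exp _ _), h.mgf, h.mgf, neg_sq]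
      have : Real.exp (Q L G (d i) (d i) * t ^ 2 / 2) ≤ Real.exp (s * t ^ 2 / 2) := by
        apply Real.exp_le_exp.2
        have := mul_le_mul_of_nonneg_right (hq i) (sq_nonneg t)
        linarith
      linarith
    refine (Finset.sum_le_sum this).trans ?_
    simp only [Finset.sum_const, Finset.card_univ, nsmul_eq_mul]
    rw [hK]; linarith
  have hpt : ∀ ω, lse (fun i => lin L (x i) ω) ≤ lse (fun i => lin L (y i) ω) + (1 / t) * (Real.log K + W ω / K - 1) := by
    intro ω
    apply lse_lip
    intro i
    have h1 : lin L (x i) ω - lin L (y i) ω = lin L (d i) ω := by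
      simp [lin, hd, sub_mul, Finset.sum_sub_distrib]
    have h2 : t * lin L (d i) ω ≤ Real.log (W ω) := by
      rw [Real.le_log_iff_exp_le (hWp ω)]
      refine le_trans ?_ (Finset.single_le_sum (f := fun i => Real.exp (t * lin L (d i) ω) + Real.exp (-t * lin L (d i) ω))
        (fun j _ => by positivity) (Finset.mem_univ i))
      have := Real.exp_pos (-t * lin L (d i) ω)
      linarith
    have h3 : Real.log (W ω) ≤ Real.log K + W ω / K - 1 := by
      have := Real.log_le_sub_one_of_pos (div_pos (hWp ω) hK0)
      rw [Real.log_div (hWp ω).ne' hK0.ne'] at this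
      linarith
    have h4 : lin L (d i) ω ≤ (1 / t) * (Real.log K + W ω / K - 1) := by
      rw [one_div, inv_mul_eq_div, le_div_iff₀ ht]; linarith
    linarith
  have hi2 : Integrable (fun ω => (1 / t) * (Real.log K + W ω / K - 1)) P :=
    (((integrable_const _).add (hWi.div_const _)).sub (integrable_const _)).const_mul _
  have hi3 : Integrable (fun ω => Real.log K + W ω / K) P := (integrable_const _).add (hWi.div_const _)
  have hI := integral_mono (h.int_lse x) ((h.int_lse y).add hi2) hpt
  rw [integral_add' (h.int_lse y) hi2, integral_const_mul,
    integral_sub hi3 (integrable_const _),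
    integral_add (integrable_const _) (hWi.div_const _), integral_div] at hI
  simp only [integral_const, probReal_univ, one_smul] at hI
  have hlog : Real.log K = Real.log (2 * Fintype.card ι) + s * t ^ 2 / 2 := by
    rw [hK, Real.log_mul (by positivity) (by positivity), Real.log_exp]
  have : (∫ ω, W ω ∂P) / K ≤ 1 := (div_le_one hK0).2 hWE
  have : (1 / t) * (Real.log K + (∫ ω, W ω ∂P) / K - 1) ≤ (1 / t) * Real.log K := by
    apply mul_le_mul_of_nonneg_left _ (by positivity)
    linarith
  rw [hlog] at this hI
  unfold EL
  linarith

end PT5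

noncomputable section PT6
open MeasureTheory ProbabilityTheory

variable {ι : Type*} [Fintype ι] [Nonempty ι]
variable {P : Measure FieldSp} {L : Finset Vtx} {G : Vtx → Vtx → ℝ}

lemma lin_smul (c : ℝ) (a : Vtx → ℝ) (ω) : lin L (fun w => c * a w) ω = c * lin L a ω := by
  simp [lin, Finset.mul_sum, mul_assoc]

def rot (L : Finset Vtx) (a : ι → Vtx → ℝ) (θ : ℝ) (p : FieldSp × FieldSp) (i : ι) : ℝ :=
  lin L (fun w => Real.cos θ * a i w) p.1 + lin L (fun w => Real.sin θ * a i w) p.2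

lemma GS.int_rot (h : GS P L G) (a : ι → Vtx → ℝ) (θ) : Integrable (fun p => lse (rot L a θ p)) (P.prod P) :=
  h.int_lse2 (fun i w => Real.cos θ * a i w) (fun i w => Real.sin θ * a i w)

lemma GS.rot_mean (h : GS P L G) (a : ι → Vtx → ℝ) (θ) : ∫ p, lse (rot L a θ p) ∂(P.prod P) = EL P L a := by
  rw [h.EL_eq (fun i w => Real.cos θ * a i w) (fun i w => Real.sin θ * a i w) a]
  · rfl
  · intro k l
    rw [Q_smul, Q_smul, ← add_mul, show Real.cos θ * Real.cos θ + Real.sin θ * Real.sin θ = 1 by nlinarith [Real.cos_sq_add_sin_sq θ], one_mul]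

lemma GS.rot_step (h : GS P L G) (a : ι → Vtx → ℝ) (θ δ) :
    ∫ p, |lse (rot L a (θ + δ) p) - lse (rot L a θ p)| ∂(P.prod P)
      = ∫ p, |lse (rot L a δ p) - lse (rot L a 0 p)| ∂(P.prod P) := by
  have hl := h.law_eq (κ := ι ⊕ ι)
    (fun k => Sum.elim (fun i w => Real.cos θ * a i w) (fun i w => Real.cos (θ + δ) * a i w) k)
    (fun k => Sum.elim (fun i w => Real.sin θ * a i w) (fun i w => Real.sin (θ + δ) * a i w) k)
    (fun k => Sum.elim (fun i w => Real.cos 0 * a i w) (fun i w => Real.cos δ * a i w) k)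
    (fun k => Sum.elim (fun i w => Real.sin 0 * a i w) (fun i w => Real.sin δ * a i w) k) (by
      have key : ∀ x y k l, Q L G (fun w => Real.cos x * a k w) (fun w => Real.cos y * a l w) +
          Q L G (fun w => Real.sin x * a k w) (fun w => Real.sin y * a l w) = Real.cos (x - y) * Q L G (a k) (a l) := by
        intro x y k l
        rw [Q_smul, Q_smul, ← add_mul, Real.cos_sub]
      rintro (k | k) (l | l) <;> simp only [Sum.elim_inl, Sum.elim_inr, key]
      · simp
      · simp
      · simp
      · simp)
  have hg : Measurable (fun z : ι ⊕ ι → ℝ => |lse (fun i => z (Sum.inr i)) - lse (fun i => z (Sum.inl i))|) := by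
    apply Measurable.abs
    exact (measurable_lse.comp (by fun_prop)).sub (measurable_lse.comp (by fun_prop))
  have e1 := integral_map (μ := P.prod P) (φ := _) (f := fun z : ι ⊕ ι → ℝ => |lse (fun i => z (Sum.inr i)) - lse (fun i => z (Sum.inl i))|)
    (hφ := (show AEMeasurable (fun (p : FieldSp × FieldSp) (k : ι ⊕ ι) =>
      lin L (Sum.elim (fun i w => Real.cos θ * a i w) (fun i w => Real.cos (θ + δ) * a i w) k) p.1 +
      lin L (Sum.elim (fun i w => Real.sin θ * a i w) (fun i w => Real.sin (θ + δ) * a i w) k) p.2) (P.prod P) by fun_prop))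
    hg.aestronglyMeasurable
  rw [hl, integral_map (by fun_prop) hg.aestronglyMeasurable] at e1
  simp only [Sum.elim_inl, Sum.elim_inr] at e1
  exact e1.symm

lemma one_sub_cos_le (δ : ℝ) : |Real.cos δ - 1| ≤ δ ^ 2 / 2 := by
  rw [abs_le]; constructor <;> linarith [Real.one_sub_sq_div_two_le_cos (x := δ), Real.cos_le_one δ, sq_nonneg δ]

lemma GS.small_step (h : GS P L G) (a : ι → Vtx → ℝ) (s : ℝ) (hs : 0 < s) (ha : ∀ i, Q L G (a i) (a i) ≤ s ^ 2)
    (δ : ℝ) (hδ : 0 ≤ δ) :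
    ∫ p, |lse (rot L a δ p) - lse (rot L a 0 p)| ∂(P.prod P)
      ≤ δ ^ 2 * (∑ i, ∫ p : FieldSp × FieldSp, |lin L (a i) p.1| ∂(P.prod P)) + 2 * δ * s := by
  have := h.prob
  have hpt : ∀ p : FieldSp × FieldSp, |lse (rot L a δ p) - lse (rot L a 0 p)| ≤ (lse (rot L a δ p) - lse (rot L a 0 p))
      + (δ ^ 2 * (∑ i, |lin L (a i) p.1|) + 2 * δ * ∑ i, |pw (fun i => lin L (a i) p.1) i * lin L (a i) p.2|) := by
    intro p
    have hg := lse_grad (rot L a 0 p) (rot L a δ p)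
    have e0 : rot L a 0 p = fun i => lin L (a i) p.1 := by
      funext i; simp [rot, lin_zero]
    have hb : -(∑ i, pw (rot L a 0 p) i * (rot L a δ p i - rot L a 0 p i)) ≤
        δ ^ 2 / 2 * (∑ i, |lin L (a i) p.1|) + δ * ∑ i, |pw (fun i => lin L (a i) p.1) i * lin L (a i) p.2| := by
      rw [e0, ← Finset.sum_neg_distrib, Finset.mul_sum, Finset.mul_sum, ← Finset.sum_add_distrib]
      refine Finset.sum_le_sum fun i _ => ?_
      set q := pw (fun i => lin L (a i) p.1) i with hq
      have hq0 : 0 ≤ q := pw_nonneg _ _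
      have hq1 : q ≤ 1 := pw_le_one _ _
      simp only [rot, lin_smul]
      set u := lin L (a i) p.1
      set v := lin L (a i) p.2
      have t1 : -(q * ((Real.cos δ - 1) * u)) ≤ δ ^ 2 / 2 * |u| := by
        refine (neg_le_abs _).trans ?_
        rw [abs_mul, abs_mul, abs_of_nonneg hq0]
        calc q * (|Real.cos δ - 1| * |u|) ≤ 1 * (δ ^ 2 / 2 * |u|) := by
              gcongr; exact one_sub_cos_le δ
          _ = _ := one_mul _
      have t2 : -(q * (Real.sin δ * v)) ≤ δ * |q * v| := by
        refine (neg_le_abs _).trans ?_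
        rw [show q * (Real.sin δ * v) = Real.sin δ * (q * v) by ring, abs_mul]
        gcongr
        have := Real.abs_sin_le_abs (x := δ)
        rwa [abs_of_nonneg hδ] at this
      nlinarith
    rcases le_total 0 (lse (rot L a δ p) - lse (rot L a 0 p)) with h0 | h0
    · rw [abs_of_nonneg h0]
      have : 0 ≤ δ ^ 2 * (∑ i, |lin L (a i) p.1|) + 2 * δ * ∑ i, |pw (fun i => lin L (a i) p.1) i * lin L (a i) p.2| := by
        have := Finset.sum_nonneg (s := Finset.univ) (f := fun i => |lin L (a i) p.1|) (fun i _ => abs_nonneg _)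
        have := Finset.sum_nonneg (s := Finset.univ) (f := fun i => |pw (fun i => lin L (a i) p.1) i * lin L (a i) p.2|) (fun i _ => abs_nonneg _)
        positivity
      linarith
    · rw [abs_of_nonpos h0]; linarith
  have i1 := (h.int_rot a δ).sub (h.int_rot a 0)
  have i2 : Integrable (fun p : FieldSp × FieldSp => ∑ i, |lin L (a i) p.1|) (P.prod P) :=
    integrable_finsetSum _ fun i _ => (h.int_fst (a i)).abs
  have i3 : Integrable (fun p : FieldSp × FieldSp => ∑ i, |pw (fun i => lin L (a i) p.1) i * lin L (a i) p.2|) (P.prod P) :=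
    integrable_finsetSum _ fun i _ => (h.int_pw a (a i) i).abs
  have i4 : Integrable (fun p : FieldSp × FieldSp => δ ^ 2 * (∑ i, |lin L (a i) p.1|) + 2 * δ * ∑ i, |pw (fun i => lin L (a i) p.1) i * lin L (a i) p.2|) (P.prod P) :=
    (i2.const_mul _).add (i3.const_mul _)
  have hI := integral_mono i1.abs (i1.add i4) hpt
  rw [integral_add' i1 i4, integral_add (i2.const_mul _) (i3.const_mul _), integral_const_mul, integral_const_mul,
    integral_sub' (h.int_rot a δ) (h.int_rot a 0), h.rot_mean, h.rot_mean, sub_self, zero_add,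
    integral_finsetSum _ (fun i _ => (h.int_fst (a i)).abs)] at hI
  have hp : ∫ p : FieldSp × FieldSp, ∑ i, |pw (fun i => lin L (a i) p.1) i * lin L (a i) p.2| ∂(P.prod P) ≤ s := by
    rw [integral_finsetSum _ fun i _ => (h.int_pw a (a i) i).abs]
    have hmp : ∀ i, Integrable (fun ω => pw (fun i => lin L (a i) ω) i) P := by
      intro i
      refine Integrable.of_bound (C := 1) ?_ (ae_of_all _ fun p => by
        rw [Real.norm_eq_abs, abs_of_nonneg (pw_nonneg _ _)]; exact pw_le_one _ _)
      exact ((measurable_pw i).comp (g := fun x : ι → ℝ => pw x i)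
        (f := fun ω => fun i => lin L (a i) ω) (by fun_prop)).aestronglyMeasurable
    have : ∀ i ∈ (Finset.univ : Finset ι), ∫ p : FieldSp × FieldSp, |pw (fun i => lin L (a i) p.1) i * lin L (a i) p.2| ∂(P.prod P)
        ≤ (∫ ω, pw (fun i => lin L (a i) ω) i ∂P) * s := by
      intro i _
      have e : ∀ p : FieldSp × FieldSp, |pw (fun i => lin L (a i) p.1) i * lin L (a i) p.2|
          = pw (fun i => lin L (a i) p.1) i * |lin L (a i) p.2| := fun p => by
        rw [abs_mul, abs_of_nonneg (pw_nonneg _ _)]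
      simp only [e]
      rw [integral_prod_mul (f := fun ω => pw (fun i => lin L (a i) ω) i) (g := fun ω => |lin L (a i) ω|)]
      exact mul_le_mul_of_nonneg_left (h.abs_le _ s hs (ha i)) (integral_nonneg fun ω => pw_nonneg _ _)
    refine (Finset.sum_le_sum this).trans ?_
    rw [← Finset.sum_mul, ← integral_finsetSum _ fun i _ => hmp i]
    simp [pw_sum]
  have : 2 * δ * ∫ p : FieldSp × FieldSp, ∑ i, |pw (fun i => lin L (a i) p.1) i * lin L (a i) p.2| ∂(P.prod P) ≤ 2 * δ * s := by
    gcongr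
  exact hI.trans (by linarith)

lemma GS.two_copy (h : GS P L G) (a : ι → Vtx → ℝ) (s : ℝ) (hs : 0 < s) (ha : ∀ i, Q L G (a i) (a i) ≤ s ^ 2) :
    ∫ p, |lse (rot L a (Real.pi / 2) p) - lse (rot L a 0 p)| ∂(P.prod P) ≤ Real.pi * s := by
  set K := ∑ i, ∫ p : FieldSp × FieldSp, |lin L (a i) p.1| ∂(P.prod P) with hK
  have step : ∀ n : ℕ, ∀ δ, 0 ≤ δ → ∫ p, |lse (rot L a (n * δ) p) - lse (rot L a 0 p)| ∂(P.prod P)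
      ≤ n * (δ ^ 2 * K + 2 * δ * s) := by
    intro n δ hδ
    induction n with
    | zero => simp
    | succ n ih =>
      have hi : ∀ x y, Integrable (fun p => |lse (rot L a x p) - lse (rot L a y p)|) (P.prod P) :=
        fun x y => ((h.int_rot a x).sub (h.int_rot a y)).abs
      have e : ((n + 1 : ℕ) : ℝ) * δ = n * δ + δ := by push_cast; ring
      have := integral_mono (hi ((n+1 : ℕ) * δ) 0) ((hi (n * δ + δ) (n * δ)).add (hi (n * δ) 0)) (fun p => by
        rw [e]; exact abs_sub_le _ _ _)
      rw [integral_add' (hi _ _) (hi _ _), h.rot_step] at this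
      have h2 := h.small_step a s hs ha δ hδ
      rw [← hK] at h2
      refine this.trans ?_
      push_cast
      linarith
  have lim : Tendsto (fun n : ℕ => Real.pi ^ 2 * K / 4 * (1 / ((n : ℝ) + 1)) + Real.pi * s) atTop (nhds (Real.pi ^ 2 * K / 4 * 0 + Real.pi * s)) :=
    (tendsto_one_div_add_atTop_nhds_zero_nat.const_mul _).add_const _
  rw [mul_zero, zero_add] at lim
  refine ge_of_tendsto' lim fun n => ?_
  have hn : (0:ℝ) < (n:ℝ) + 1 := by positivity
  have := step (n+1) (Real.pi / 2 / ((n:ℝ) + 1)) (by positivity)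
  push_cast at this
  rw [mul_div_cancel₀ _ hn.ne'] at this
  refine this.trans (le_of_eq ?_)
  field_simp
  ring

/-- B2 -/
lemma GS.conc (h : GS P L G) (a : ι → Vtx → ℝ) (s : ℝ) (hs : 0 < s) (ha : ∀ i, Q L G (a i) (a i) ≤ s ^ 2) :
    ∫ ω, |lse (fun i => lin L (a i) ω) - EL P L a| ∂P ≤ Real.pi * s := by
  have := h.prob
  have h2 := h.two_copy a s hs ha
  have hi := h.int_lse a
  have e0 : ∀ p, rot L a 0 p = fun i => lin L (a i) p.1 := by
    intro p; funext i; simp [rot, lin_zero]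
  have e1 : ∀ p, rot L a (Real.pi / 2) p = fun i => lin L (a i) p.2 := by
    intro p; funext i; simp [rot, lin_zero]
  have hI := ((h.int_rot a (Real.pi / 2)).sub (h.int_rot a 0)).abs
  simp only [Pi.sub_apply, e0, e1] at hI h2
  rw [integral_prod _ hI] at h2
  refine le_trans ?_ h2
  refine integral_mono (hi.sub (integrable_const _)).abs hI.integral_prod_left (fun ω => ?_)
  simp only
  have : lse (fun i => lin L (a i) ω) - EL P L a = -∫ ω', (lse (fun i => lin L (a i) ω') - lse (fun i => lin L (a i) ω)) ∂P := by
    rw [integral_sub hi (integrable_const _)]; simp [EL]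
  rw [this, abs_neg]
  exact abs_integral_le_integral_abs

end PT6

noncomputable section PT7
open MeasureTheory ProbabilityTheory

lemma mem_intr {B : Finset Vtx} {w : Vtx} : w ∈ intr B ↔ w ∈ B ∧
    ((w.1 + 1, w.2) ∈ B ∧ (w.1 - 1, w.2) ∈ B ∧ (w.1, w.2 + 1) ∈ B ∧ (w.1, w.2 - 1) ∈ B) := by
  unfold intr bdry
  rw [Finset.mem_sdiff, Finset.mem_filter]
  tauto

lemma intr_mono {A B : Finset Vtx} (h : A ⊆ B) : intr A ⊆ intr B := by
  intro w hw
  rw [mem_intr] at *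
  exact ⟨h hw.1, h hw.2.1, h hw.2.2.1, h hw.2.2.2.1, h hw.2.2.2.2⟩

lemma intr_sub (B : Finset Vtx) : intr B ⊆ B := Finset.sdiff_subset

lemma mem_VN {N : ℕ} {w : Vtx} : w ∈ VN N ↔ (0 ≤ w.1 ∧ w.1 ≤ N) ∧ 0 ≤ w.2 ∧ w.2 ≤ N := by
  unfold VN
  rw [Finset.mem_Icc, Prod.le_def, Prod.le_def]; tauto

lemma mem_E {N : ℕ} {w : Vtx} : w ∈ intr (VN N) ↔ (1 ≤ w.1 ∧ w.1 + 1 ≤ N) ∧ 1 ≤ w.2 ∧ w.2 + 1 ≤ N := by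
  rw [mem_intr]; simp only [mem_VN]
  constructor <;> intro h <;> refine ⟨?_, ?_⟩ <;> omega

lemma nbhd_sub {N : ℕ} {lam : ℝ} {v : Vtx} (hv : v ∈ VN N) : nbhd N lam v ⊆ VN N := by
  unfold nbhd
  split_ifs
  · exact Finset.Subset.refl _
  · simpa using hv
  · exact Finset.filter_subset _ _

lemma abs_le_floor {x y : ℤ} {R : ℝ} : |(x : ℝ) - (y : ℝ)| ≤ R ↔ |x - y| ≤ ⌊R⌋ := by
  rw [Int.le_floor]; push_cast; rfl

lemma intr_nbhd {N : ℕ} {lam : ℝ} (hl : lam ≠ 0) {v : Vtx} (_hv : v ∈ VN N) :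
    intr (nbhd N lam v) = bx ⌊(N : ℝ) ^ ((1 : ℝ) - lam) / 2⌋ v ∩ intr (VN N) := by
  by_cases h1 : lam = 1
  · subst h1
    have : ⌊(N : ℝ) ^ ((1 : ℝ) - 1) / 2⌋ = 0 := by
      rw [sub_self, Real.rpow_zero]; rw [Int.floor_eq_iff]; norm_num
    rw [this]
    ext w
    rw [mem_intr, Finset.mem_inter, mem_bx]
    simp only [nbhd, hl, if_false, if_true, Finset.mem_singleton, Prod.ext_iff]
    constructor
    · intro h; omega
    · intro h; omega
  · ext w
    rw [mem_intr, Finset.mem_inter, mem_bx, mem_intr]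
    simp only [nbhd, hl, h1, if_false, Finset.mem_filter, abs_le_floor]
    simp only [abs_le]
    set m := ⌊(N : ℝ) ^ ((1 : ℝ) - lam) / 2⌋
    constructor
    · rintro ⟨⟨a, a'⟩, ⟨b, b'⟩, ⟨c, c'⟩, ⟨d, d'⟩, e, e'⟩
      refine ⟨?_, a, b, c, d, e⟩
      omega
    · rintro ⟨h, a, b, c, d, e⟩
      refine ⟨⟨a, ?_⟩, ⟨b, ?_⟩, ⟨c, ?_⟩, ⟨d, ?_⟩, e, ?_⟩ <;> omega

lemma gs_of {N : ℕ} {P : Measure FieldSp} (h : IsGFF N P) :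
    ∃ G, IsGr (intr (VN N)) G ∧ GS P (VN N) G := by
  obtain ⟨hp, G, hG, hl⟩ := h
  have hG' := isGr_of _ _ hG
  exact ⟨G, hG', hp, hG'.symm, hG'.psd _ (intr_sub _), hl⟩

variable {P : Measure FieldSp} {L : Finset Vtx} {G : Vtx → Vtx → ℝ}

lemma lin_single {v : Vtx} (hv : v ∈ L) (ω) : lin L (Pi.single v 1) ω = ω v := by
  unfold lin
  rw [Finset.sum_eq_single v]
  · simp
  · intro w _ h; simp [Pi.single_eq_of_ne h]
  · intro h; exact absurd hv h

lemma Q_single_right {w : Vtx} (hw : w ∈ L) (a) : Q L G a (Pi.single w 1) = ∑ x ∈ L, a x * G x w := by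
  unfold Q
  refine Finset.sum_congr rfl fun x _ => ?_
  rw [Finset.sum_eq_single w]
  · simp
  · intro y _ h; simp [Pi.single_eq_of_ne h]
  · intro h; exact absurd hw h

lemma Q_zero_left (a) : Q L G (fun _ => 0) a = 0 := by simp [Q]
lemma Q_zero_right (a) : Q L G a (fun _ => 0) = 0 := by simp [Q]

/-- orthogonality gives vanishing set integrals -/
lemma GS.setInt_zero (h : GS P L G) (u : Vtx → ℝ) (W : Finset Vtx) (hW : W ⊆ L)
    (ho : ∀ w ∈ W, Q L G u (Pi.single w 1) = 0) (B : Set (W → ℝ)) (hB : MeasurableSet B) :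
    ∫ ω in (fun (ω : FieldSp) (w : W) => ω w) ⁻¹' B, lin L u ω ∂P = 0 := by
  have := h.prob
  have hl := h.law_eq (κ := Option W)
    (fun k => k.elim u (fun w => Pi.single (w : Vtx) 1)) (fun _ _ => 0)
    (fun k => k.elim u (fun _ _ => 0)) (fun k => k.elim (fun _ => 0) (fun w => Pi.single (w : Vtx) 1)) (by
      rintro (_ | k) (_ | l) <;> simp only [Option.elim, Q_zero_left, Q_zero_right, add_zero, zero_add]
      · exact ho l l.2
      · rw [Q_symm h.sy]; exact ho k k.2)
  set g : (Option W → ℝ) → ℝ := fun z => B.indicator (fun _ => (1:ℝ)) (fun w => z (some w)) * z none with hg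
  have hgm : Measurable g := by
    refine Measurable.mul ?_ (by fun_prop)
    exact (measurable_const.indicator hB).comp (by fun_prop)
  have e1 := integral_map (μ := P.prod P) (f := g)
    (hφ := (show AEMeasurable (fun (p : FieldSp × FieldSp) (k : Option W) =>
      lin L (k.elim u (fun w => Pi.single (w : Vtx) 1)) p.1 + lin L (fun _ => 0) p.2) (P.prod P) by fun_prop))
    hgm.aestronglyMeasurable
  rw [hl, integral_map (by fun_prop) hgm.aestronglyMeasurable] at e1
  simp only [hg, Option.elim, lin_zero, add_zero, zero_add] at e1
  have hs : ∀ (w : W) ω, lin L (Pi.single (w : Vtx) 1) ω = ω w := fun w ω => lin_single (hW w.2) ω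
  simp only [hs] at e1
  have e2 : ∫ p : FieldSp × FieldSp, B.indicator (fun _ => (1:ℝ)) (fun w : W => p.2 w) * lin L u p.1 ∂(P.prod P) = 0 := by
    simp only [mul_comm (B.indicator _ _)]
    rw [integral_prod_mul (f := fun ω => lin L u ω) (g := fun ω : FieldSp => B.indicator (fun _ => (1:ℝ)) (fun w : W => ω w)), h.mean, zero_mul]
  rw [e2] at e1
  have e3 := integral_fun_fst (μ := P) (ν := P) (f := fun ω => B.indicator (fun _ => (1:ℝ)) (fun w : W => ω w) * lin L u ω)
  rw [e3] at e1
  simp only [probReal_univ, one_smul] at e1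
  have hA : MeasurableSet ((fun (ω : FieldSp) (w : W) => ω w) ⁻¹' B) :=
    (show Measurable (fun (ω : FieldSp) (w : W) => ω w) by fun_prop) hB
  rw [← integral_indicator hA, e1]
  congr 1
  funext ω
  by_cases hb : (fun w : W => ω w) ∈ B
  · simp [Set.indicator, hb]
  · simp [Set.indicator, hb]

lemma phi_eq {N : ℕ} (hG : IsGr (intr (VN N)) G) (h : GS P (VN N) G) (lam : ℝ) {v : Vtx} (hv : v ∈ VN N) :
    phiScale N P v lam =ᵐ[P] lin (VN N) (pk (intr (nbhd N lam v)) v) := by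
  have := h.prob
  set D := intr (nbhd N lam v) with hD
  have hDE : D ⊆ intr (VN N) := intr_mono (nbhd_sub hv)
  have hm : scaleAlg N lam v ≤ (inferInstance : MeasurableSpace FieldSp) := by
    unfold scaleAlg
    exact iSup₂_le fun w _ => (measurable_pi_apply w).comap_le
  set W := VN N \ D with hW
  unfold phiScale
  symm
  have hY : ∀ ω : FieldSp, lin (VN N) (Pi.single v 1) ω = ω v := fun ω => lin_single hv ω
  have hYi : Integrable (fun ω : FieldSp => ω v) P := by
    simpa only [hY] using (show Integrable (fun ω => lin (VN N) (Pi.single v 1) ω) P from h.integrable (Pi.single v 1))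
  refine ae_eq_condExp_of_forall_setIntegral_eq hm hYi (fun s _ _ => (h.integrable _).integrableOn) ?_ ?_
  · intro s hs _
    have hle : scaleAlg N lam v ≤ MeasurableSpace.comap (fun (ω : FieldSp) (w : W) => ω w) inferInstance := by
      unfold scaleAlg
      refine iSup₂_le fun w hw => ?_
      have hwW : w ∈ W := Finset.mem_sdiff.2 hw
      have : (fun ω : FieldSp => ω w) = (fun z : W → ℝ => z ⟨w, hwW⟩) ∘ (fun (ω : FieldSp) (w : W) => ω w) := rfl
      rw [this, ← MeasurableSpace.comap_comp]
      exact MeasurableSpace.comap_mono (measurable_pi_apply _).comap_le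
    obtain ⟨B, hB, rfl⟩ := hle s hs
    have hz := h.setInt_zero (fun w => (Pi.single v 1 : Vtx → ℝ) w - pk D v w) W Finset.sdiff_subset (by
      intro w hw
      rw [Q_sub_left, Q_single_right (Finset.mem_sdiff.1 hw).1, Q_single_right (Finset.mem_sdiff.1 hw).1,
        sum_pk_G hDE (intr_sub _) hG, (gr_spec D).1 v w (Or.inr (Finset.mem_sdiff.1 hw).2)]
      rw [Finset.sum_eq_single v]
      · simp
      · intro y _ h; simp [Pi.single_eq_of_ne h]
      · intro h; exact absurd hv h) B hB
    have e : ∀ ω, lin (VN N) (fun w => (Pi.single v 1 : Vtx → ℝ) w - pk D v w) ω = ω v - lin (VN N) (pk D v) ω := by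
      intro ω
      rw [← hY ω]; simp only [lin, sub_mul, Finset.sum_sub_distrib]
    simp only [e] at hz
    rw [integral_sub hYi.integrableOn (h.integrable _).integrableOn] at hz
    linarith
  · apply Measurable.aestronglyMeasurable
    unfold lin
    refine Finset.measurable_sum _ fun w hw => ?_
    by_cases hwD : w ∈ D
    · simp only [pk_zero _ _ hwD, zero_mul]; exact measurable_const
    · refine Measurable.const_mul ?_ _
      have hle : MeasurableSpace.comap (fun ω : FieldSp => ω w) inferInstance ≤ scaleAlg N lam v := by
        unfold scaleAlg
        exact le_iSup₂_of_le (f := fun w (_ : w ∈ {w : Vtx | w ∈ VN N ∧ w ∉ intr (nbhd N lam v)}) =>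
          MeasurableSpace.comap (fun ω : FieldSp => ω w) inferInstance) w ⟨hw, hwD⟩ le_rfl
      exact Measurable.mono (comap_measurable _) hle le_rfl

lemma phi_zero {N : ℕ} (hG : IsGr (intr (VN N)) G) (h : GS P (VN N) G) {v : Vtx} (hv : v ∈ VN N) :
    phiScale N P v 0 =ᵐ[P] fun _ => 0 := by
  refine (phi_eq hG h 0 hv).trans ?_
  have e : nbhd N 0 v = VN N := by simp [nbhd]
  rw [e]
  have hq := h.sq (pk (intr (VN N)) v)
  rw [pk_G_pk (Finset.Subset.refl _) (intr_sub _) hG, (gr_spec (intr (VN N))).uniq hG, sub_self] at hq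
  rw [integral_eq_zero_iff_of_nonneg (fun ω => sq_nonneg _) (h.int_sq _)] at hq
  filter_upwards [hq] with ω hω
  simpa using hω

lemma abel (s f : ℕ → ℝ) (n : ℕ) : ∑ i ∈ Finset.Icc 1 n, s i * (f i - f (i - 1))
    = ∑ i ∈ Finset.Icc 1 n, (s i - s (i + 1)) * f i + s (n + 1) * f n - s 1 * f 0 := by
  induction n with
  | zero => simp
  | succ n ih =>
    rw [Finset.sum_Icc_succ_top (by omega), Finset.sum_Icc_succ_top (by omega), ih]
    simp only [Nat.add_sub_cancel]; ring

/-- coefficients -/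
def cf (M : ℕ) (sigv : ℕ → ℝ) (i : ℕ) : ℝ := (if i ≤ M then sigv i else 0) - (if i + 1 ≤ M then sigv (i + 1) else 0)
/-- half box sizes -/
def mf (N : ℕ) (lamv : ℕ → ℝ) (i : ℕ) : ℤ := ⌊(N : ℝ) ^ ((1 : ℝ) - lamv i) / 2⌋

lemma lam_pos {M : ℕ} {sigv lamv : ℕ → ℝ} (hp : ScaleParams M sigv lamv) {i} (hi : i ∈ Finset.Icc 1 M) :
    lamv 1 ≤ lamv i := by
  obtain ⟨_, _, _, _, h⟩ := hp
  rw [Finset.mem_Icc] at hi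
  obtain ⟨h1, h2⟩ := hi
  induction i, h1 using Nat.le_induction with
  | base => exact le_rfl
  | succ n hn ih => exact (ih (by omega)).trans (h n (by omega)).le

lemma psi_eq {N M : ℕ} {sigv lamv : ℕ → ℝ} (hp : ScaleParams M sigv lamv)
    (hG : IsGr (intr (VN N)) G) (h : GS P (VN N) G) {v : Vtx} (hv : v ∈ VN N) :
    psiFld N M sigv lamv P v =ᵐ[P] lin (VN N) (Tt (intr (VN N)) M (cf M sigv) (mf N lamv) v) := by
  have h0 := phi_zero hG h hv
  have hi : ∀ᵐ ω ∂P, ∀ i ∈ Finset.Icc 1 M, phiScale N P v (lamv i) ω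
      = lin (VN N) (pk (bx (mf N lamv i) v ∩ intr (VN N)) v) ω := by
    rw [eventually_all_finset]
    intro i hi
    have hne : lamv i ≠ 0 := by
      have := lam_pos hp hi
      have h1 := hp.2.2.2.2 0 (by have := hp.1; omega)
      rw [hp.2.2.1] at h1
      simp only [zero_add] at h1
      linarith
    have := phi_eq hG h (lamv i) hv
    rwa [intr_nbhd hne hv] at this
  filter_upwards [h0, hi] with ω h0 hi
  unfold psiFld
  have e : ∑ i ∈ Finset.Icc 1 M, sigv i * (phiScale N P v (lamv i) ω - phiScale N P v (lamv (i - 1)) ω)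
      = ∑ i ∈ Finset.Icc 1 M, (if i ≤ M then sigv i else 0) * ((fun i => phiScale N P v (lamv i) ω) i - (fun i => phiScale N P v (lamv i) ω) (i - 1)) := by
    refine Finset.sum_congr rfl fun i hi => ?_
    rw [if_pos (Finset.mem_Icc.1 hi).2]
  rw [e, abel (fun i => if i ≤ M then sigv i else 0)]
  simp only [hp.2.2.1, h0, mul_zero, sub_zero, add_le_iff_nonpos_right, nonpos_iff_eq_zero, one_ne_zero, if_false, zero_mul, add_zero]
  unfold Tt
  rw [← lin_sum]
  refine Finset.sum_congr rfl fun i h => ?_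
  rw [hi i h]; rfl

end PT7

noncomputable section PT8
open MeasureTheory ProbabilityTheory

lemma gibbs_diff {A V : Finset Vtx} (hAV : A ⊆ V) (hA : A.Nonempty) (e : Vtx → ℝ) (he : ∀ v, 0 < e v)
    (F : (Fin 2 → Vtx) → ℝ) (hF0 : ∀ x, 0 ≤ F x) (hF1 : ∀ x, F x ≤ 1) :
    |(∑ vv ∈ Fintype.piFinset (fun _ : Fin 2 => V), (∏ i, e (vv i) / ∑ v ∈ V, e v) * F vv) -
      ∑ vv ∈ Fintype.piFinset (fun _ : Fin 2 => A), (∏ i, e (vv i) / ∑ v ∈ A, e v) * F vv|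
      ≤ 2 * ((∑ v ∈ V \ A, e v) / (∑ v ∈ V \ A, e v + ∑ v ∈ A, e v)) := by
  set z := ∑ v ∈ V, e v with hz
  set zA := ∑ v ∈ A, e v with hzA
  have hsplit : ∑ v ∈ V \ A, e v + zA = z := Finset.sum_sdiff hAV
  have hzA0 : 0 < zA := Finset.sum_pos (fun v _ => he v) hA
  have hB0 : 0 ≤ ∑ v ∈ V \ A, e v := Finset.sum_nonneg fun v _ => (he v).le
  have hz0 : 0 < z := by linarith
  rw [hsplit, show ∑ v ∈ V \ A, e v = z - zA by linarith]
  have hp : ∀ (W : Finset Vtx), ∑ vv ∈ Fintype.piFinset (fun _ : Fin 2 => W), ∏ i, e (vv i) = (∑ v ∈ W, e v) ^ 2 := by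
    intro W
    rw [← Finset.prod_univ_sum (fun _ : Fin 2 => W) (fun _ v => e v)]; simp
  have hd : ∀ (W : Finset Vtx) (y : ℝ), ∑ vv ∈ Fintype.piFinset (fun _ : Fin 2 => W), (∏ i, e (vv i) / y) * F vv
      = (∑ vv ∈ Fintype.piFinset (fun _ : Fin 2 => W), (∏ i, e (vv i)) * F vv) / y ^ 2 := by
    intro W y
    rw [Finset.sum_div]
    refine Finset.sum_congr rfl fun vv _ => ?_
    rw [Finset.prod_div_distrib]; simp; ring
  rw [hd, hd]
  have hpp : ∀ vv : Fin 2 → Vtx, 0 ≤ ∏ i, e (vv i) := fun vv => Finset.prod_nonneg fun i _ => (he _).le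
  have hsub : Fintype.piFinset (fun _ : Fin 2 => A) ⊆ Fintype.piFinset (fun _ : Fin 2 => V) :=
    Fintype.piFinset_subset _ _ fun _ => hAV
  set a := ∑ vv ∈ Fintype.piFinset (fun _ : Fin 2 => A), (∏ i, e (vv i)) * F vv with ha
  set b := ∑ vv ∈ Fintype.piFinset (fun _ : Fin 2 => V), (∏ i, e (vv i)) * F vv with hb
  have ha0 : 0 ≤ a := Finset.sum_nonneg fun vv _ => mul_nonneg (hpp vv) (hF0 vv)
  have ha1 : a ≤ zA ^ 2 := by
    rw [← hp A]
    exact Finset.sum_le_sum fun vv _ => mul_le_of_le_one_right (hpp vv) (hF1 vv)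
  have hb1 : a ≤ b := Finset.sum_le_sum_of_subset_of_nonneg hsub fun vv _ _ => mul_nonneg (hpp vv) (hF0 vv)
  have hb2 : b - a ≤ z ^ 2 - zA ^ 2 := by
    rw [← hp A, ← hp V, ha, hb, ← Finset.sum_sdiff hsub, ← Finset.sum_sdiff hsub, add_sub_cancel_right, add_sub_cancel_right]
    exact Finset.sum_le_sum fun vv _ => mul_le_of_le_one_right (hpp vv) (hF1 vv)
  have hx1 : zA ≤ z := by linarith
  set x := zA / z with hx
  have hx0 : 0 ≤ x := by positivity
  have hx1' : x ≤ 1 := (div_le_one hz0).2 hx1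
  have e1 : (z - zA) / z = 1 - x := by rw [sub_div, div_self hz0.ne']
  rw [e1]
  have e2 : (b - a) / z ^ 2 ≤ 1 - x ^ 2 := by
    rw [hx, div_pow, div_le_iff₀ (by positivity)]
    have : (1 - zA ^ 2 / z ^ 2) * z ^ 2 = z ^ 2 - zA ^ 2 := by field_simp
    linarith
  have e3 : a / zA ^ 2 - a / z ^ 2 = a / zA ^ 2 * (1 - x ^ 2) := by
    rw [hx]; field_simp
  have e4 : a / zA ^ 2 ≤ 1 := (div_le_one (by positivity)).2 ha1
  have e5 : 0 ≤ a / zA ^ 2 := by positivity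
  have e6 : 0 ≤ (b - a) / z ^ 2 := div_nonneg (by linarith) (by positivity)
  have e7 : b / z ^ 2 - a / zA ^ 2 = (b - a) / z ^ 2 - a / zA ^ 2 * (1 - x ^ 2) := by
    rw [← e3]; ring
  have e8 : 0 ≤ 1 - x ^ 2 := by nlinarith
  rw [e7, abs_le]
  constructor <;> nlinarith

lemma shift_count {S A : Finset Vtx} {κ : Type*} (J : Finset κ) (h : κ → Vtx) (w : ℕ)
    (hS : ∀ k ∈ J, ∀ v ∈ S, v + h k ∈ A) (hw : ∀ a ∈ A, (J.filter (fun k => a - h k ∈ S)).card ≤ w)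
    (f : Vtx → ℝ) (hf : ∀ v, 0 ≤ f v) :
    ∑ k ∈ J, ∑ v ∈ S, f (v + h k) ≤ w * ∑ a ∈ A, f a := by
  have h1 : ∀ k ∈ J, ∑ v ∈ S, f (v + h k) = ∑ a ∈ A, if a - h k ∈ S then f a else 0 := by
    intro k hk
    rw [← Finset.sum_filter]
    refine Finset.sum_bij (fun v _ => v + h k) ?_ ?_ ?_ ?_
    · intro v hv; rw [Finset.mem_filter]; exact ⟨hS k hk v hv, by simpa using hv⟩
    · intro v _ u _ e; simpa using e
    · intro a ha; exact ⟨a - h k, (Finset.mem_filter.1 ha).2, by simp⟩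
    · intro v _; rfl
  rw [Finset.sum_congr rfl h1, Finset.sum_comm, Finset.mul_sum]
  refine Finset.sum_le_sum fun a ha => ?_
  rw [← Finset.sum_filter, Finset.sum_const, nsmul_eq_mul]
  exact mul_le_mul_of_nonneg_right (by exact_mod_cast hw a ha) (hf a)

lemma log_avg {κ : Type*} (J : Finset κ) (hJ : J.Nonempty) (z : κ → ℝ) (hz : ∀ k, 0 < z k) :
    (∑ k ∈ J, Real.log (z k)) / J.card ≤ Real.log ((∑ k ∈ J, z k) / J.card) := by
  have hc : (0:ℝ) < J.card := by exact_mod_cast hJ.card_pos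
  have := strictConcaveOn_log_Ioi.concaveOn.le_map_sum (t := J) (w := fun _ => (1:ℝ) / J.card) (p := z)
    (fun _ _ => by positivity) (by simp [hc.ne']) (fun k _ => hz k)
  simp only [smul_eq_mul] at this
  rw [← Finset.mul_sum, ← Finset.mul_sum] at this
  rw [div_eq_inv_mul, div_eq_inv_mul]
  simpa [one_div] using this

lemma min_exp_le (a R : ℝ) (ha : 0 < a) (hR : 0 ≤ R) : min 1 (Real.exp (R - a)) ≤ Real.exp (-a / 2) + 2 * R / a := by
  by_cases h : a / 2 ≤ R
  · refine (min_le_left _ _).trans ?_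
    have : 1 ≤ 2 * R / a := by rw [le_div_iff₀ ha]; linarith
    linarith [Real.exp_pos (-a / 2)]
  · push Not at h
    refine (min_le_right _ _).trans ?_
    have : Real.exp (R - a) ≤ Real.exp (-a / 2) := Real.exp_le_exp.2 (by linarith)
    have : 0 ≤ 2 * R / a := by positivity
    linarith

variable {P : Measure FieldSp} {L : Finset Vtx} {G : Vtx → Vtx → ℝ}

lemma zs_coe (S : Finset Vtx) (x : Vtx → ℝ) : zs (fun i : S => x i) = ∑ v ∈ S, Real.exp (x v) :=
  Finset.sum_coe_sort S (fun v => Real.exp (x v))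

lemma ratio_pt {κ : Type*} (J : Finset κ) (hJ : J.Nonempty) (w : ℕ) (hw0 : 0 < w) (zk : κ → ℝ) (hzk : ∀ k, 0 < zk k)
    (zA zS : ℝ) (hzA0 : 0 < zA) (hcount : ∑ k ∈ J, zk k ≤ w * zA) (e0 R0 : ℝ) (h5 : Real.log zS - e0 ≤ R0) (ε : ℝ)
    (Rk : κ → ℝ) (hk : ∀ k ∈ J, e0 - ε - Rk k ≤ Real.log (zk k)) (a : ℝ) (ha : a ≤ Real.log ((J.card : ℝ) / w) - ε) :
    Real.log zS - Real.log zA ≤ R0 + (∑ k ∈ J, Rk k) / J.card - a := by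
  have hc : (0:ℝ) < J.card := by exact_mod_cast hJ.card_pos
  have hwr : (0:ℝ) < w := by exact_mod_cast hw0
  have hav := log_avg J hJ zk hzk
  have hsum0 : 0 < ∑ k ∈ J, zk k := Finset.sum_pos (fun k _ => hzk k) hJ
  have h1 : Real.log ((∑ k ∈ J, zk k) / J.card) ≤ Real.log (w / J.card * zA) := by
    apply Real.log_le_log (div_pos hsum0 hc)
    rw [div_mul_eq_mul_div]
    exact div_le_div_of_nonneg_right hcount hc.le
  rw [Real.log_mul (div_pos hwr hc).ne' hzA0.ne', Real.log_div hwr.ne' hc.ne'] at h1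
  rw [Real.log_div hc.ne' hwr.ne'] at ha
  have h2 : e0 - ε - (∑ k ∈ J, Rk k) / J.card ≤ (∑ k ∈ J, Real.log (zk k)) / J.card := by
    rw [le_div_iff₀ hc, sub_mul, div_mul_cancel₀ _ hc.ne']
    have := Finset.sum_le_sum hk
    rw [Finset.sum_sub_distrib, Finset.sum_const, nsmul_eq_mul] at this
    linarith
  linarith

/-- Step B -/
lemma GS.ratio (h : GS P L G) (T : Vtx → Vtx → ℝ) {S A : Finset Vtx} (hSne : S.Nonempty) {κ : Type*} (J : Finset κ) (hJ : J.Nonempty)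
    (sh : κ → Vtx) (w : ℕ) (hw0 : 0 < w)
    (hS : ∀ k ∈ J, ∀ v ∈ S, v + sh k ∈ A) (hw : ∀ a ∈ A, (J.filter (fun k => a - sh k ∈ S)).card ≤ w)
    (hSL : ∀ v ∈ S, v ∈ L) (hAL : ∀ v ∈ A, v ∈ L)
    (s : ℝ) (hs : 0 < s) (hvar : ∀ v ∈ L, Q L G (T v) (T v) ≤ s ^ 2)
    (ε : ℝ) (hcmp : ∀ k ∈ J, EL P L (fun i : S => T i) ≤ EL P L (fun i : S => T (i + sh k)) + ε)
    (a : ℝ) (ha0 : 0 < a) (ha : a ≤ Real.log ((J.card : ℝ) / w) - ε) :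
    ∫ ω, min 1 ((∑ v ∈ S, Real.exp (lin L (T v) ω)) / ∑ v ∈ A, Real.exp (lin L (T v) ω)) ∂P
      ≤ Real.exp (-a / 2) + 4 * Real.pi * s / a := by
  have := h.prob
  have : Nonempty S := hSne.to_subtype
  have hc : (0:ℝ) < J.card := by exact_mod_cast hJ.card_pos
  have hwr : (0:ℝ) < w := by exact_mod_cast hw0
  have hAne : A.Nonempty := by
    obtain ⟨k, hk⟩ := hJ; obtain ⟨v, hv⟩ := hSne; exact ⟨_, hS k hk v hv⟩
  set R0 : FieldSp → ℝ := fun ω => |lse (fun i : S => lin L (T i) ω) - EL P L (fun i : S => T i)| with hR0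
  set Rk : κ → FieldSp → ℝ := fun k ω => |lse (fun i : S => lin L (T (i + sh k)) ω) - EL P L (fun i : S => T (i + sh k))| with hRk
  set R : FieldSp → ℝ := fun ω => R0 ω + (∑ k ∈ J, Rk k ω) / J.card with hR
  have hRn : ∀ ω, 0 ≤ R ω := fun ω => add_nonneg (abs_nonneg _) (div_nonneg (Finset.sum_nonneg fun k _ => abs_nonneg _) hc.le)
  have i0 : Integrable R0 P := ((h.int_lse _).sub (integrable_const _)).abs
  have ik : ∀ k, Integrable (Rk k) P := fun k => ((h.int_lse _).sub (integrable_const _)).abs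
  have is : Integrable (fun ω => (∑ k ∈ J, Rk k ω) / J.card) P := (integrable_finsetSum _ fun k _ => ik k).div_const _
  have iR : Integrable R P := i0.add is
  have hER : ∫ ω, R ω ∂P ≤ 2 * (Real.pi * s) := by
    simp only [hR]
    rw [integral_add i0 is, integral_div, integral_finsetSum _ fun k _ => ik k]
    have b0 : ∫ ω, R0 ω ∂P ≤ Real.pi * s := h.conc _ s hs fun i => hvar _ (hSL i i.2)
    have bk : ∀ k ∈ J, ∫ ω, Rk k ω ∂P ≤ Real.pi * s := fun k hk =>
      h.conc _ s hs fun i => hvar _ (hAL _ (hS k hk i i.2))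
    have : (∑ k ∈ J, ∫ ω, Rk k ω ∂P) / J.card ≤ Real.pi * s := by
      rw [div_le_iff₀ hc]
      refine (Finset.sum_le_sum bk).trans ?_
      rw [Finset.sum_const, nsmul_eq_mul, mul_comm]
    linarith
  have hpt : ∀ ω, min 1 ((∑ v ∈ S, Real.exp (lin L (T v) ω)) / ∑ v ∈ A, Real.exp (lin L (T v) ω))
      ≤ Real.exp (-a / 2) + 2 * R ω / a := by
    intro ω
    refine le_trans (min_le_min le_rfl ?_) (min_exp_le a (R ω) ha0 (hRn ω))
    set zA := ∑ v ∈ A, Real.exp (lin L (T v) ω) with hzA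
    have hzA0 : 0 < zA := Finset.sum_pos (fun v _ => Real.exp_pos _) hAne
    have eS : ∑ v ∈ S, Real.exp (lin L (T v) ω) = zs (fun i : S => lin L (T i) ω) := (zs_coe S fun v => lin L (T v) ω).symm
    rw [eS]
    set zS := zs (fun i : S => lin L (T i) ω) with hzS
    have hzS0 : 0 < zS := zs_pos _
    have key : Real.log zS - Real.log zA ≤ R ω - a := by
      have hcount := shift_count J sh w hS hw (fun v => Real.exp (lin L (T v) ω)) (fun v => (Real.exp_pos _).le)
      rw [← hzA] at hcount
      have ek : ∀ k, ∑ v ∈ S, Real.exp (lin L (T (v + sh k)) ω) = zs (fun i : S => lin L (T (i + sh k)) ω) :=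
        fun k => (zs_coe S fun v => lin L (T (v + sh k)) ω).symm
      simp only [ek] at hcount
      refine ratio_pt J hJ w hw0 (fun k => zs (fun i : S => lin L (T (i + sh k)) ω)) (fun k => zs_pos _) zA zS hzA0 hcount
        (EL P L (fun i : S => T i)) (R0 ω) (le_abs_self _) ε (fun k => Rk k ω) ?_ a ha
      intro k hk
      have h3 := hcmp k hk
      have h4 : EL P L (fun i : S => T (i + sh k)) - lse (fun i : S => lin L (T (i + sh k)) ω) ≤ Rk k ω := by
        simp only [hRk]; rw [abs_sub_comm]; exact le_abs_self _
      have h6 : lse (fun i : S => lin L (T (i + sh k)) ω) = Real.log (zs (fun i : S => lin L (T (i + sh k)) ω)) := rfl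
      rw [h6] at h4
      linarith
    rw [← Real.log_le_iff_le_exp (div_pos hzS0 hzA0), Real.log_div hzS0.ne' hzA0.ne']
    exact key
  have hmono : ∫ ω, min 1 ((∑ v ∈ S, Real.exp (lin L (T v) ω)) / ∑ v ∈ A, Real.exp (lin L (T v) ω)) ∂P
      ≤ ∫ ω, (Real.exp (-a / 2) + 2 * R ω / a) ∂P := by
    refine integral_mono_of_nonneg (ae_of_all _ fun ω => ?_) ((integrable_const _).add ((iR.const_mul 2).div_const a)) (ae_of_all _ hpt)
    exact le_min zero_le_one (div_nonneg (Finset.sum_nonneg fun v _ => (Real.exp_pos _).le) (Finset.sum_nonneg fun v _ => (Real.exp_pos _).le))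
  refine hmono.trans ?_
  rw [integral_add (integrable_const _) ((iR.const_mul 2).div_const a), integral_div, integral_const_mul]
  simp only [integral_const, probReal_univ, one_smul]
  have : 2 * (∫ ω, R ω ∂P) / a ≤ 4 * Real.pi * s / a := by
    exact div_le_div_of_nonneg_right (by linarith) ha0.le
  linarith

end PT8

noncomputable section PT9
open MeasureTheory ProbabilityTheory

def fl (N : ℕ) (b : Bool) (x : ℤ) : ℤ := if b then x else N - x
def sg (b : Bool) : ℤ := if b then 1 else -1

def Sq (N : ℕ) (w0 : ℤ) (b : Bool × Bool) : Finset Vtx :=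
  (VN N).filter fun v => 2 * fl N b.1 v.1 ≤ N ∧ 2 * fl N b.2 v.2 ≤ N ∧ (fl N b.1 v.1 ≤ w0 ∨ fl N b.2 v.2 ≤ w0)

def hk (b : Bool × Bool) (k : ℤ) : Vtx := (sg b.1 * k, sg b.2 * k)

lemma Sq_nonempty (N : ℕ) (w0 : ℤ) (hw : 0 ≤ w0) (b) : (Sq N w0 b).Nonempty := by
  refine ⟨(if b.1 then 0 else N, if b.2 then 0 else N), ?_⟩
  unfold Sq
  rw [Finset.mem_filter, mem_VN]
  obtain ⟨b1, b2⟩ := b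
  cases b1 <;> cases b2 <;> simp [fl] <;> omega

lemma Sq_geo {N M : ℕ} {m : ℕ → ℤ} {w0 K k : ℤ} (hw0 : 0 ≤ w0) (hwK : w0 ≤ K) (hK : 8 * K ≤ N)
    (hm0 : ∀ i ∈ Finset.Icc 1 M, 0 ≤ m i) (hm : ∀ i ∈ Finset.Icc 1 M, m i ≤ K) (hk1 : K < k) (hk2 : k ≤ 2 * K)
    (b) (v : Vtx) (hv : v ∈ Sq N w0 b) : GeoV (intr (VN N)) M m (hk b k) v := by
  unfold Sq at hv
  rw [Finset.mem_filter, mem_VN] at hv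
  obtain ⟨b1, b2⟩ := b
  obtain ⟨v1, v2⟩ := v
  constructor
  · intro i hi w hw
    have h1 := hm i hi
    rw [mem_bx] at hw
    rw [mem_E]
    obtain ⟨w1, w2⟩ := w
    cases b1 <;> cases b2 <;> simp [fl, hk, sg] at * <;> omega
  · rcases hv with ⟨hv, h1, h2, h3 | h3⟩
    · refine ⟨sg b1, 0, w0, ?_, hw0, ?_, ?_⟩
      · unfold unitv; cases b1 <;> simp [sg]
      · rintro ⟨w1, w2⟩ hw
        rw [mem_E] at hw
        cases b1 <;> simp [fl, sg] at * <;> omega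
      · rintro ⟨w1, w2⟩ hw hw'
        rw [mem_E] at hw hw'
        rw [le_abs, le_abs]
        cases b1 <;> cases b2 <;> simp [fl, hk, sg] at * <;> omega
    · refine ⟨0, sg b2, w0, ?_, hw0, ?_, ?_⟩
      · unfold unitv; cases b2 <;> simp [sg]
      · rintro ⟨w1, w2⟩ hw
        rw [mem_E] at hw
        cases b2 <;> simp [fl, sg] at * <;> omega
      · rintro ⟨w1, w2⟩ hw hw'
        rw [mem_E] at hw hw'
        rw [le_abs, le_abs]
        cases b1 <;> cases b2 <;> simp [fl, hk, sg] at * <;> omega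
  · intro i hi
    have h1 := hm i hi
    have h0 := hm0 i hi
    by_cases c1 : fl N b1 v1 < m i
    · right
      refine ⟨h0, sg b1, 0, ?_, ?_⟩
      · unfold unitv; cases b1 <;> simp [sg]
      · rintro ⟨w1, w2⟩ hw
        rw [mem_E] at hw
        cases b1 <;> simp [fl, sg] at * <;> omega
    by_cases c2 : fl N b2 v2 < m i
    · right
      refine ⟨h0, 0, sg b2, ?_, ?_⟩
      · unfold unitv; cases b2 <;> simp [sg]
      · rintro ⟨w1, w2⟩ hw
        rw [mem_E] at hw
        cases b2 <;> simp [fl, sg] at * <;> omega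
    left
    rintro ⟨w1, w2⟩ hw
    rw [mem_bx] at hw
    rw [mem_E]
    cases b1 <;> cases b2 <;> simp [fl, sg] at * <;> omega

lemma mem_AN_of {N : ℕ} {ρ : ℝ} {K : ℤ} (hKR : (N : ℝ) ^ ((1 : ℝ) - ρ) ≤ K) {v : Vtx}
    (h1 : K ≤ v.1) (h2 : v.1 + K ≤ N) (h3 : K ≤ v.2) (h4 : v.2 + K ≤ N) (hK : 0 ≤ K) : v ∈ AN N ρ := by
  unfold AN
  rw [Finset.mem_filter, mem_VN]
  refine ⟨by omega, fun z hz => hKR.trans ?_⟩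
  rw [mem_VN] at hz
  have : K ≤ |v.1 - z.1| ∨ K ≤ |v.2 - z.2| := by
    rw [le_abs, le_abs]; omega
  apply Real.le_sqrt_of_sq_le
  have hKr : (0:ℝ) ≤ K := by exact_mod_cast hK
  rcases this with h | h
  · have h' : (K:ℝ) ≤ |(v.1:ℝ) - z.1| := by exact_mod_cast h
    have := pow_le_pow_left₀ hKr h' 2
    rw [sq_abs] at this
    nlinarith [sq_nonneg ((v.2:ℝ) - z.2)]
  · have h' : (K:ℝ) ≤ |(v.2:ℝ) - z.2| := by exact_mod_cast h
    have := pow_le_pow_left₀ hKr h' 2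
    rw [sq_abs] at this
    nlinarith [sq_nonneg ((v.1:ℝ) - z.1)]

lemma AN_compl {N : ℕ} {ρ : ℝ} {w0 : ℤ} (hw : w0 = ⌊(N : ℝ) ^ ((1 : ℝ) - ρ)⌋) :
    VN N \ AN N ρ ⊆ Finset.univ.biUnion (Sq N w0) := by
  intro v hv
  rw [Finset.mem_sdiff] at hv
  obtain ⟨hv, hvA⟩ := hv
  unfold AN at hvA
  rw [Finset.mem_filter] at hvA
  have : ∃ z, z ∉ VN N ∧ Real.sqrt (((v.1 : ℝ) - (z.1 : ℝ)) ^ 2 + ((v.2 : ℝ) - (z.2 : ℝ)) ^ 2) < (N : ℝ) ^ ((1 : ℝ) - ρ) := by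
    by_contra hcon
    push Not at hcon
    exact hvA ⟨hv, hcon⟩
  obtain ⟨z, hz, hlt⟩ := this
  have a1 : |v.1 - z.1| ≤ w0 := by
    rw [hw, ← abs_le_floor]
    refine le_trans ?_ hlt.le
    rw [← Real.sqrt_sq_eq_abs]
    apply Real.sqrt_le_sqrt
    nlinarith [sq_nonneg ((v.2:ℝ) - z.2)]
  have a2 : |v.2 - z.2| ≤ w0 := by
    rw [hw, ← abs_le_floor]
    refine le_trans ?_ hlt.le
    rw [← Real.sqrt_sq_eq_abs]
    apply Real.sqrt_le_sqrt
    nlinarith [sq_nonneg ((v.1:ℝ) - z.1)]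
  rw [abs_le] at a1 a2
  rw [mem_VN] at hz
  have hv' := mem_VN.1 hv
  rw [Finset.mem_biUnion]
  refine ⟨(decide (2 * v.1 ≤ N), decide (2 * v.2 ≤ N)), Finset.mem_univ _, ?_⟩
  unfold Sq
  rw [Finset.mem_filter]
  refine ⟨hv, ?_⟩
  by_cases c1 : 2 * v.1 ≤ N <;> by_cases c2 : 2 * v.2 ≤ N <;> simp [fl, c1, c2] <;> omega

lemma Sq_shift {N : ℕ} {ρ : ℝ} {w0 K k : ℤ} (hKR : (N : ℝ) ^ ((1 : ℝ) - ρ) ≤ K) (hK0 : 0 ≤ K) (hK : 8 * K ≤ N)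
    (hk1 : K < k) (hk2 : k ≤ 2 * K) (b) (v : Vtx) (hv : v ∈ Sq N w0 b) : v + hk b k ∈ AN N ρ := by
  unfold Sq at hv
  rw [Finset.mem_filter, mem_VN] at hv
  obtain ⟨b1, b2⟩ := b
  obtain ⟨v1, v2⟩ := v
  apply mem_AN_of hKR _ _ _ _ hK0 <;>
  cases b1 <;> cases b2 <;> simp [fl, hk, sg] at * <;> omega

lemma Sq_mult {N : ℕ} {w0 : ℤ} (hw0 : 0 ≤ w0) (J : Finset ℤ) (b) (a : Vtx) :
    (J.filter (fun k => a - hk b k ∈ Sq N w0 b)).card ≤ (2 * (w0 + 1)).toNat := by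
  have : J.filter (fun k => a - hk b k ∈ Sq N w0 b) ⊆
      Finset.Icc (fl N b.1 a.1 - w0) (fl N b.1 a.1) ∪ Finset.Icc (fl N b.2 a.2 - w0) (fl N b.2 a.2) := by
    intro k hk'
    rw [Finset.mem_filter] at hk'
    obtain ⟨_, h⟩ := hk'
    unfold Sq at h
    rw [Finset.mem_filter, mem_VN] at h
    rw [Finset.mem_union, Finset.mem_Icc, Finset.mem_Icc]
    obtain ⟨b1, b2⟩ := b
    obtain ⟨a1, a2⟩ := a
    cases b1 <;> cases b2 <;> simp [fl, hk, sg] at * <;> omega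
  refine (Finset.card_le_card this).trans ((Finset.card_union_le _ _).trans ?_)
  rw [Int.card_Icc, Int.card_Icc]
  omega

lemma Sq_card {N : ℕ} {w0 : ℤ} (b) : (Sq N w0 b).card ≤ (N + 1) ^ 2 := by
  refine (Finset.card_le_card (Finset.filter_subset _ _)).trans ?_
  unfold VN
  rw [← Finset.Icc_product_Icc]
  rw [Finset.card_product]
  simp [sq]

end PT9

noncomputable section PT10
open MeasureTheory ProbabilityTheory

variable {P : Measure FieldSp} {G : Vtx → Vtx → ℝ}

lemma Tt_smul (E : Finset Vtx) (M : ℕ) (c : ℕ → ℝ) (m : ℕ → ℤ) (β : ℝ) (v : Vtx) :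
    Tt E M (fun i => β * c i) m v = fun w => β * Tt E M c m v w := by
  funext w
  unfold Tt
  rw [Finset.mul_sum]
  exact Finset.sum_congr rfl fun i _ => mul_assoc _ _ _

lemma cmp_step {N M : ℕ} (hG : IsGr (intr (VN N)) G) (h : GS P (VN N) G) (c : ℕ → ℝ) (m : ℕ → ℤ) {S : Finset Vtx}
    (hSne : S.Nonempty) (sh : Vtx) (hg : ∀ v ∈ S, GeoV (intr (VN N)) M m sh v) (t : ℝ) (ht : 0 < t) :
    EL P (VN N) (fun i : S => Tt (intr (VN N)) M c m i) ≤ EL P (VN N) (fun i : S => Tt (intr (VN N)) M c m (i + sh))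
      + 1 / t * (Real.log (2 * S.card) + ((∑ i ∈ Finset.Icc 1 M, |c i|) ^ 2 * (4 * C1)) * t ^ 2 / 2) := by
  have : Nonempty S := hSne.to_subtype
  obtain ⟨y, r, h1, h2⟩ := cov_compare (intr_sub (VN N)) hG c S sh hg
  have e1 := h.EL_pert (fun i : S => Tt (intr (VN N)) M c m i) (fun i : S => y i) _ t ht (fun i => h2 i i.2)
  have e2 := h.EL_mono (fun i : S => Tt (intr (VN N)) M c m (i + sh)) (fun i : S => y i) (fun i : S => r i)
    (fun k l => h1 k k.2 l l.2)
  rw [Fintype.card_coe] at e1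
  linarith

lemma num1 {N : ℕ} {ρ : ℝ} (hN : 16 ≤ N) (hr : 16 ≤ (N : ℝ) ^ ρ) :
    (N : ℝ) ^ ((1 : ℝ) - ρ) ≤ (N : ℝ) / 16 ∧ (N : ℝ) / 16 ≤ (((N : ℤ) / 8 : ℤ) : ℝ) := by
  have hN0 : (0:ℝ) < N := by exact_mod_cast (by omega : 0 < N)
  constructor
  · rw [Real.rpow_sub hN0, Real.rpow_one]
    exact div_le_div_of_nonneg_left hN0.le (by norm_num) hr
  · have : (N : ℤ) ≤ 16 * ((N : ℤ) / 8) := by omega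
    have : (N : ℝ) ≤ 16 * (((N : ℤ) / 8 : ℤ) : ℝ) := by exact_mod_cast this
    linarith

lemma num2 {N : ℕ} {ρ : ℝ} (hN : 16 ≤ N) (hr : 16 ≤ (N : ℝ) ^ ρ) (hρ : ρ ≤ 1) :
    ρ * Real.log N - Real.log 64 ≤
      Real.log (((((N : ℤ) / 8).toNat : ℕ) : ℝ) / (((2 * (⌊(N : ℝ) ^ ((1 : ℝ) - ρ)⌋ + 1)).toNat : ℕ) : ℝ)) := by
  obtain ⟨h1, h2⟩ := num1 hN hr
  have hN0 : (0:ℝ) < N := by exact_mod_cast (by omega : 0 < N)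
  have hN1 : (1:ℝ) ≤ N := by exact_mod_cast (by omega : 1 ≤ N)
  set X := (N : ℝ) ^ ((1 : ℝ) - ρ) with hX
  have hX1 : 1 ≤ X := Real.one_le_rpow hN1 (by linarith)
  have hfl : 0 ≤ ⌊X⌋ := Int.floor_nonneg.2 (by linarith)
  have e1 : ((((N : ℤ) / 8).toNat : ℕ) : ℝ) = (((N : ℤ) / 8 : ℤ) : ℝ) := by
    have : ((((N : ℤ) / 8).toNat : ℕ) : ℤ) = (N : ℤ) / 8 := Int.toNat_of_nonneg (by omega)
    rw [← Int.cast_natCast (R := ℝ), this]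
  have e2 : (((2 * (⌊X⌋ + 1)).toNat : ℕ) : ℝ) = 2 * ((⌊X⌋ : ℝ) + 1) := by
    have : (((2 * (⌊X⌋ + 1)).toNat : ℕ) : ℤ) = 2 * (⌊X⌋ + 1) := Int.toNat_of_nonneg (by omega)
    exact_mod_cast congrArg (fun z : ℤ => (z : ℝ)) this
  rw [e1, e2]
  have hfl' : (⌊X⌋ : ℝ) ≤ X := Int.floor_le X
  have hfl0 : (0:ℝ) ≤ ⌊X⌋ := by exact_mod_cast hfl
  have e3 : ρ * Real.log N - Real.log 64 = Real.log ((N : ℝ) / 16 / (4 * X)) := by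
    rw [Real.log_div (by positivity) (by positivity), Real.log_div (by positivity) (by norm_num), Real.log_mul (by norm_num) (by positivity), hX,
      Real.log_rpow hN0]
    have : Real.log 64 = Real.log 16 + Real.log 4 := by
      rw [← Real.log_mul (by norm_num) (by norm_num)]; norm_num
    rw [this]; ring
  rw [e3]
  apply Real.log_le_log (by positivity)
  apply div_le_div₀ (by linarith) h2 (by positivity) (by linarith)

lemma ratioN {N M : ℕ} {sigv lamv : ℕ → ℝ} (hp : ScaleParams M sigv lamv) (hG : IsGr (intr (VN N)) G) (h : GS P (VN N) G)
    (c : ℕ → ℝ) (ρ : ℝ) (hρ0 : 0 < ρ) (hρ1 : ρ < lamv 1) (hN : 16 ≤ N) (hr : 16 ≤ (N : ℝ) ^ ρ)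
    (hbig : Real.log 64 + ρ / 8 * (Real.log 8 + ((∑ i ∈ Finset.Icc 1 M, |c i|) ^ 2 * (4 * C1)) * (8 / ρ) ^ 2 / 2)
      ≤ ρ / 4 * Real.log N)
    (s : ℝ) (hs : 0 < s)
    (hvar : ∀ v ∈ VN N, Q (VN N) G (Tt (intr (VN N)) M c (mf N lamv) v) (Tt (intr (VN N)) M c (mf N lamv) v) ≤ s ^ 2)
    (b : Bool × Bool) :
    ∫ ω, min 1 ((∑ v ∈ Sq N ⌊(N : ℝ) ^ ((1 : ℝ) - ρ)⌋ b, Real.exp (lin (VN N) (Tt (intr (VN N)) M c (mf N lamv) v) ω)) /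
        ∑ v ∈ AN N ρ, Real.exp (lin (VN N) (Tt (intr (VN N)) M c (mf N lamv) v) ω)) ∂P
      ≤ Real.exp (-(ρ / 2 * Real.log N) / 2) + 4 * Real.pi * s / (ρ / 2 * Real.log N) := by
  obtain ⟨n1, n2⟩ := num1 hN hr
  have hρ2 : ρ ≤ 1 := by
    have := lam_pos hp (Finset.mem_Icc.2 ⟨hp.1, le_rfl⟩)
    rw [hp.2.2.2.1] at this
    linarith
  have n3 := num2 hN hr hρ2
  have hN1 : (1:ℝ) < N := by exact_mod_cast (by omega : 1 < N)
  have hlog : 0 < Real.log N := Real.log_pos hN1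
  have hX0 : 0 ≤ (N : ℝ) ^ ((1 : ℝ) - ρ) := by positivity
  set X := (N : ℝ) ^ ((1 : ℝ) - ρ) with hX
  have hw0 : 0 ≤ ⌊X⌋ := Int.floor_nonneg.2 hX0
  have hwK : ⌊X⌋ ≤ (N : ℤ) / 8 := by
    have : (⌊X⌋ : ℝ) ≤ (((N : ℤ) / 8 : ℤ) : ℝ) := (Int.floor_le X).trans (n1.trans n2)
    exact_mod_cast this
  have hK8 : 8 * ((N : ℤ) / 8) ≤ N := by omega
  have hKpos : 0 < (N : ℤ) / 8 := by omega
  have hm0 : ∀ i ∈ Finset.Icc 1 M, 0 ≤ mf N lamv i := fun i _ => Int.floor_nonneg.2 (by positivity)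
  have hm : ∀ i ∈ Finset.Icc 1 M, mf N lamv i ≤ (N : ℤ) / 8 := by
    intro i hi
    refine le_trans (Int.floor_le_floor ?_) hwK
    have h1 : (N : ℝ) ^ ((1 : ℝ) - lamv i) ≤ X :=
      Real.rpow_le_rpow_of_exponent_le hN1.le (by linarith [lam_pos hp hi])
    have h2 : (0:ℝ) ≤ (N : ℝ) ^ ((1 : ℝ) - lamv i) := by positivity
    linarith
  have hSne := Sq_nonempty N ⌊X⌋ hw0 b
  have hJc : (Finset.Ioc ((N : ℤ) / 8) (2 * ((N : ℤ) / 8))).card = ((N : ℤ) / 8).toNat := by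
    rw [Int.card_Ioc]; congr 1; ring
  refine h.ratio (Tt (intr (VN N)) M c (mf N lamv)) hSne (Finset.Ioc ((N : ℤ) / 8) (2 * ((N : ℤ) / 8)))
    ⟨2 * ((N : ℤ) / 8), by rw [Finset.mem_Ioc]; omega⟩ (hk b) (2 * (⌊X⌋ + 1)).toNat (by omega) ?_ ?_ ?_ ?_ s hs hvar
    (1 / (8 / ρ) * (Real.log (2 * (Sq N ⌊X⌋ b).card) + ((∑ i ∈ Finset.Icc 1 M, |c i|) ^ 2 * (4 * C1)) * (8 / ρ) ^ 2 / 2)) ?_ _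
    (by positivity) ?_
  · intro k hk v hv
    rw [Finset.mem_Ioc] at hk
    exact Sq_shift (n1.trans n2) hKpos.le hK8 hk.1 hk.2 b v hv
  · intro a _
    exact Sq_mult hw0 _ b a
  · exact fun v hv => Finset.mem_of_mem_filter v hv
  · exact fun v hv => Finset.mem_of_mem_filter v hv
  · intro k hk'
    rw [Finset.mem_Ioc] at hk'
    exact cmp_step hG h c (mf N lamv) hSne (hk b k) (Sq_geo hw0 hwK hK8 hm0 hm hk'.1 hk'.2 b) (8 / ρ) (by positivity)
  · rw [hJc]
    have hc0 : (0:ℝ) < (Sq N ⌊X⌋ b).card := by exact_mod_cast hSne.card_pos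
    have hc1 : ((Sq N ⌊X⌋ b).card : ℝ) ≤ ((N : ℝ) + 1) ^ 2 := by exact_mod_cast Sq_card (N := N) (w0 := ⌊X⌋) b
    have hl : Real.log (2 * (Sq N ⌊X⌋ b).card) ≤ Real.log 8 + 2 * Real.log N := by
      have : Real.log 8 + 2 * Real.log N = Real.log (8 * (N : ℝ) ^ 2) := by
        rw [Real.log_mul (by norm_num) (by positivity), Real.log_pow]; norm_num
      rw [this]
      apply Real.log_le_log (by positivity)
      nlinarith
    have : 1 / (8 / ρ) = ρ / 8 := by field_simp
    rw [this]
    have := mul_le_mul_of_nonneg_left hl (by positivity : 0 ≤ ρ / 8)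
    nlinarith

lemma sum_biUnion_le' {κ : Type*} (I : Finset κ) (Sb : κ → Finset Vtx) (e : Vtx → ℝ) (he : ∀ v, 0 < e v) :
    ∑ v ∈ I.biUnion Sb, e v ≤ ∑ b ∈ I, ∑ v ∈ Sb b, e v := by
  induction I using Finset.induction_on with
  | empty => simp
  | insert a I ha ih =>
    rw [Finset.biUnion_insert, Finset.sum_insert ha]
    have h1 := Finset.sum_union_inter (s₁ := Sb a) (s₂ := I.biUnion Sb) (f := e)
    have h2 : 0 ≤ ∑ v ∈ Sb a ∩ I.biUnion Sb, e v := Finset.sum_nonneg fun v _ => (he v).le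
    linarith

lemma pt_bound {V A : Finset Vtx} {Sb : Bool × Bool → Finset Vtx} (hc : V \ A ⊆ Finset.univ.biUnion Sb) (hA : A.Nonempty)
    (e : Vtx → ℝ) (he : ∀ v, 0 < e v) :
    (∑ v ∈ V \ A, e v) / (∑ v ∈ V \ A, e v + ∑ v ∈ A, e v) ≤ ∑ b, min 1 ((∑ v ∈ Sb b, e v) / ∑ v ∈ A, e v) := by
  have hA0 : 0 < ∑ v ∈ A, e v := Finset.sum_pos (fun v _ => he v) hA
  have hn : ∀ S : Finset Vtx, 0 ≤ ∑ v ∈ S, e v := fun S => Finset.sum_nonneg fun v _ => (he v).le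
  have hterm : ∀ b, 0 ≤ min 1 ((∑ v ∈ Sb b, e v) / ∑ v ∈ A, e v) := fun b => le_min zero_le_one (div_nonneg (hn _) hA0.le)
  by_cases hx : ∃ b, 1 ≤ (∑ v ∈ Sb b, e v) / ∑ v ∈ A, e v
  · obtain ⟨b, hb⟩ := hx
    have h1 : (∑ v ∈ V \ A, e v) / (∑ v ∈ V \ A, e v + ∑ v ∈ A, e v) ≤ 1 := by
      apply div_le_one_of_le₀ <;> linarith [hn (V \ A)]
    refine h1.trans ?_
    have := Finset.single_le_sum (f := fun b => min 1 ((∑ v ∈ Sb b, e v) / ∑ v ∈ A, e v)) (fun b _ => hterm b) (Finset.mem_univ b)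
    rw [min_eq_left hb] at this
    exact this
  · push Not at hx
    have : ∀ b ∈ Finset.univ, min 1 ((∑ v ∈ Sb b, e v) / ∑ v ∈ A, e v) = (∑ v ∈ Sb b, e v) / ∑ v ∈ A, e v :=
      fun b _ => min_eq_right (hx b).le
    rw [Finset.sum_congr rfl this, ← Finset.sum_div]
    apply div_le_div₀ (Finset.sum_nonneg fun b _ => hn _) _ hA0 (by linarith [hn (V \ A)])
    refine (Finset.sum_le_sum_of_subset_of_nonneg hc fun v _ _ => (he v).le).trans ?_
    exact sum_biUnion_le' _ _ e he

lemma gint [IsProbabilityMeasure P] (L : Finset Vtx) (T : Vtx → Vtx → ℝ) (V : Finset Vtx) (F : (Fin 2 → Vtx) → ℝ)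
    (h0 : ∀ x, 0 ≤ F x) (h1 : ∀ x, F x ≤ 1) :
    Integrable (fun ω => ∑ vv ∈ Fintype.piFinset (fun _ : Fin 2 => V),
      (∏ i, Real.exp (lin L (T (vv i)) ω) / ∑ v ∈ V, Real.exp (lin L (T v) ω)) * F vv) P := by
  refine integrable_finsetSum _ fun vv hvv => ?_
  rw [Fintype.mem_piFinset] at hvv
  have hm : ∀ v, Measurable (fun ω => Real.exp (lin L (T v) ω)) := fun v => (measurable_lin L (T v)).exp
  refine Integrable.of_bound (C := 1) ?_ (ae_of_all _ fun ω => ?_)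
  · refine Measurable.aestronglyMeasurable ?_
    refine Measurable.mul_const ?_ _
    refine Finset.measurable_prod _ fun i _ => (hm _).div ?_
    exact Finset.measurable_sum _ fun v _ => hm v
  · have hn : 0 ≤ ∑ v ∈ V, Real.exp (lin L (T v) ω) := Finset.sum_nonneg fun v _ => (Real.exp_pos _).le
    have hp0 : 0 ≤ ∏ i, Real.exp (lin L (T (vv i)) ω) / ∑ v ∈ V, Real.exp (lin L (T v) ω) :=
      Finset.prod_nonneg fun i _ => div_nonneg (Real.exp_pos _).le hn
    have hp1 : ∏ i, Real.exp (lin L (T (vv i)) ω) / ∑ v ∈ V, Real.exp (lin L (T v) ω) ≤ 1 :=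
      Finset.prod_le_one (fun i _ => div_nonneg (Real.exp_pos _).le hn) fun i _ =>
        div_le_one_of_le₀ (Finset.single_le_sum (f := fun v => Real.exp (lin L (T v) ω)) (fun v _ => (Real.exp_pos _).le) (hvv i)) hn
    rw [Real.norm_eq_abs, abs_of_nonneg (mul_nonneg hp0 (h0 vv))]
    exact mul_le_one₀ hp1 (h0 vv) (h1 vv)

lemma minint [IsProbabilityMeasure P] (L : Finset Vtx) (T : Vtx → Vtx → ℝ) (S A : Finset Vtx) :
    Integrable (fun ω => min 1 ((∑ v ∈ S, Real.exp (lin L (T v) ω)) / ∑ v ∈ A, Real.exp (lin L (T v) ω))) P := by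
  have hm : ∀ v, Measurable (fun ω => Real.exp (lin L (T v) ω)) := fun v => (measurable_lin L (T v)).exp
  refine Integrable.of_bound (C := 1) ?_ (ae_of_all _ fun ω => ?_)
  · refine Measurable.aestronglyMeasurable ?_
    refine measurable_const.min ((Finset.measurable_sum _ fun v _ => hm v).div (Finset.measurable_sum _ fun v _ => hm v))
  · rw [Real.norm_eq_abs, abs_of_nonneg]
    · exact min_le_left _ _
    · exact le_min zero_le_one (div_nonneg (Finset.sum_nonneg fun v _ => (Real.exp_pos _).le) (Finset.sum_nonneg fun v _ => (Real.exp_pos _).le))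

lemma diff_bound [IsProbabilityMeasure P] (L : Finset Vtx) (T : Vtx → Vtx → ℝ) {V A : Finset Vtx} (hAV : A ⊆ V) (hA : A.Nonempty)
    {Sb : Bool × Bool → Finset Vtx} (hc : V \ A ⊆ Finset.univ.biUnion Sb) (F : (Fin 2 → Vtx) → ℝ)
    (h0 : ∀ x, 0 ≤ F x) (h1 : ∀ x, F x ≤ 1) (B : ℝ)
    (hB : ∀ b, ∫ ω, min 1 ((∑ v ∈ Sb b, Real.exp (lin L (T v) ω)) / ∑ v ∈ A, Real.exp (lin L (T v) ω)) ∂P ≤ B) :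
    |(∫ ω, ∑ vv ∈ Fintype.piFinset (fun _ : Fin 2 => V),
      (∏ i, Real.exp (lin L (T (vv i)) ω) / ∑ v ∈ V, Real.exp (lin L (T v) ω)) * F vv ∂P) -
     ∫ ω, ∑ vv ∈ Fintype.piFinset (fun _ : Fin 2 => A),
      (∏ i, Real.exp (lin L (T (vv i)) ω) / ∑ v ∈ A, Real.exp (lin L (T v) ω)) * F vv ∂P| ≤ 8 * B := by
  rw [← integral_sub (gint L T V F h0 h1) (gint L T A F h0 h1)]
  refine (abs_integral_le_integral_abs).trans ?_
  have hmono : ∫ ω, |(∑ vv ∈ Fintype.piFinset (fun _ : Fin 2 => V),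
      (∏ i, Real.exp (lin L (T (vv i)) ω) / ∑ v ∈ V, Real.exp (lin L (T v) ω)) * F vv) -
      ∑ vv ∈ Fintype.piFinset (fun _ : Fin 2 => A),
      (∏ i, Real.exp (lin L (T (vv i)) ω) / ∑ v ∈ A, Real.exp (lin L (T v) ω)) * F vv| ∂P ≤
      ∫ ω, 2 * ∑ b, min 1 ((∑ v ∈ Sb b, Real.exp (lin L (T v) ω)) / ∑ v ∈ A, Real.exp (lin L (T v) ω)) ∂P := by
    refine integral_mono ((gint L T V F h0 h1).sub (gint L T A F h0 h1)).abs
      ((integrable_finsetSum _ fun b _ => minint L T (Sb b) A).const_mul 2) fun ω => ?_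
    have p1 := gibbs_diff hAV hA (fun v => Real.exp (lin L (T v) ω)) (fun v => Real.exp_pos _) F h0 h1
    have p2 := pt_bound hc hA (fun v => Real.exp (lin L (T v) ω)) (fun v => Real.exp_pos _)
    exact p1.trans (mul_le_mul_of_nonneg_left p2 (by norm_num))
  refine hmono.trans ?_
  rw [integral_const_mul, integral_finsetSum _ fun b _ => minint L T (Sb b) A]
  have : ∑ b : Bool × Bool, ∫ ω, min 1 ((∑ v ∈ Sb b, Real.exp (lin L (T v) ω)) / ∑ v ∈ A, Real.exp (lin L (T v) ω)) ∂P ≤ 4 * B := by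
    refine (Finset.sum_le_sum fun b _ => hB b).trans ?_
    simp
  linarith

lemma main_bound {N M : ℕ} {sigv lamv : ℕ → ℝ} (hp : ScaleParams M sigv lamv) (hP : IsGFF N P)
    (β ρ : ℝ) (hβ : 0 < β) (hρ0 : 0 < ρ) (hρ1 : ρ < lamv 1) (hN : 16 ≤ N) (hr : 16 ≤ (N : ℝ) ^ ρ)
    (hbig : Real.log 64 + ρ / 8 * (Real.log 8 + ((∑ i ∈ Finset.Icc 1 M, |β * cf M sigv i|) ^ 2 * (4 * C1)) * (8 / ρ) ^ 2 / 2)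
      ≤ ρ / 4 * Real.log N)
    (W : ℝ) (hW : 0 < W) (hvar : ∀ v ∈ VN N, psiCov N M sigv lamv P v v ≤ W)
    (F : (Fin 2 → Vtx) → ℝ) (h0 : ∀ x, 0 ≤ F x) (h1 : ∀ x, F x ≤ 1) :
    |gibbsExp N M sigv lamv P β 2 F - gibbsExpRes N M sigv lamv P β ρ 2 (fun vv _ => F vv)| ≤
      8 * (Real.exp (-(ρ / 2 * Real.log N) / 2) + 4 * Real.pi * (β * Real.sqrt W) / (ρ / 2 * Real.log N)) := by
  obtain ⟨G, hG, h⟩ := gs_of hP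
  have := h.prob
  set T := Tt (intr (VN N)) M (fun i => β * cf M sigv i) (mf N lamv) with hT
  have hAV : AN N ρ ⊆ VN N := Finset.filter_subset _ _
  have hlinT : ∀ v ω, lin (VN N) (T v) ω = β * lin (VN N) (Tt (intr (VN N)) M (cf M sigv) (mf N lamv) v) ω := by
    intro v ω
    rw [hT, Tt_smul, lin_smul]
  have hae : ∀ᵐ ω ∂P, ∀ v ∈ VN N, β * psiFld N M sigv lamv P v ω = lin (VN N) (T v) ω := by
    rw [Finset.eventually_all]
    intro v hv
    filter_upwards [psi_eq hp hG h hv] with ω hω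
    rw [hlinT, hω]
  have hvQ : ∀ v ∈ VN N, Q (VN N) G (T v) (T v) ≤ (β * Real.sqrt W) ^ 2 := by
    intro v hv
    rw [hT, Tt_smul, Q_smul, mul_pow, Real.sq_sqrt hW.le, sq, ← h.sq]
    refine mul_le_mul_of_nonneg_left ?_ (by positivity)
    refine le_trans (le_of_eq ?_) (hvar v hv)
    unfold psiCov
    refine integral_congr_ae ?_
    filter_upwards [psi_eq hp hG h hv] with ω hω
    rw [hω, sq]
  have hrat := ratioN hp hG h (fun i => β * cf M sigv i) ρ hρ0 hρ1 hN hr hbig (β * Real.sqrt W)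
    (mul_pos hβ (Real.sqrt_pos.2 hW)) hvQ
  rw [← hT] at hrat
  have hA : (AN N ρ).Nonempty := by
    obtain ⟨n1, n2⟩ := num1 hN hr
    have hX0 : 0 ≤ (N : ℝ) ^ ((1 : ℝ) - ρ) := by positivity
    obtain ⟨v, hv⟩ := Sq_nonempty N 0 le_rfl (true, true)
    exact ⟨_, Sq_shift (n1.trans n2) (by omega) (by omega) (by omega : (N : ℤ) / 8 < 2 * ((N : ℤ) / 8)) le_rfl (true, true) v hv⟩
  have e1 : gibbsExp N M sigv lamv P β 2 F = ∫ ω, ∑ vv ∈ Fintype.piFinset (fun _ : Fin 2 => VN N),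
      (∏ i, Real.exp (lin (VN N) (T (vv i)) ω) / ∑ v ∈ VN N, Real.exp (lin (VN N) (T v) ω)) * F vv ∂P := by
    unfold gibbsExp
    refine integral_congr_ae ?_
    filter_upwards [hae] with ω hω
    refine Finset.sum_congr rfl fun vv hvv => ?_
    rw [Fintype.mem_piFinset] at hvv
    congr 1
    refine Finset.prod_congr rfl fun i _ => ?_
    unfold gibbsW ZN
    rw [hω _ (hvv i), Finset.sum_congr rfl fun v hv => congrArg Real.exp (hω v hv)]
  have e2 : gibbsExpRes N M sigv lamv P β ρ 2 (fun vv _ => F vv) = ∫ ω, ∑ vv ∈ Fintype.piFinset (fun _ : Fin 2 => AN N ρ),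
      (∏ i, Real.exp (lin (VN N) (T (vv i)) ω) / ∑ v ∈ AN N ρ, Real.exp (lin (VN N) (T v) ω)) * F vv ∂P := by
    unfold gibbsExpRes
    refine integral_congr_ae ?_
    filter_upwards [hae] with ω hω
    refine Finset.sum_congr rfl fun vv hvv => ?_
    rw [Fintype.mem_piFinset] at hvv
    congr 1
    refine Finset.prod_congr rfl fun i _ => ?_
    unfold gibbsWres ZNres
    rw [hω _ (hAV (hvv i)), Finset.sum_congr rfl fun v hv => congrArg Real.exp (hω v (hAV hv))]
  rw [e1, e2]
  exact diff_bound (VN N) T hAV hA (AN_compl rfl) F h0 h1 _ hrat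

lemma lim_bound (ρ β Jv C₀ : ℝ) (hρ : 0 < ρ) (hJ : 0 ≤ Jv) (hC : 0 < C₀) :
    Tendsto (fun x : ℝ => 8 * (Real.exp (-(ρ / 2 * x) / 2) + 4 * Real.pi * (β * Real.sqrt (Jv * x + C₀)) / (ρ / 2 * x))) atTop (nhds 0) := by
  have t1 : Tendsto (fun x : ℝ => Real.exp (-(ρ / 2 * x) / 2)) atTop (nhds 0) := by
    refine Real.tendsto_exp_atBot.comp ?_
    have : Tendsto (fun x : ℝ => (-(ρ / 4)) * x) atTop atBot :=
      tendsto_id.const_mul_atTop_of_neg (by linarith)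
    refine this.congr fun x => by ring
  have t2 : Tendsto (fun x : ℝ => Real.sqrt (Jv * x⁻¹ + C₀ * (x⁻¹ * x⁻¹))) atTop (nhds 0) := by
    have hi := tendsto_inv_atTop_zero (𝕜 := ℝ)
    have := ((hi.const_mul Jv).add ((hi.mul hi).const_mul C₀)).sqrt
    simpa using this
  have t3 : Tendsto (fun x : ℝ => 4 * Real.pi * (β * Real.sqrt (Jv * x + C₀)) / (ρ / 2 * x)) atTop (nhds 0) := by
    have := t2.const_mul (4 * Real.pi * β / (ρ / 2))
    rw [mul_zero] at this
    refine this.congr' ?_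
    filter_upwards [eventually_gt_atTop 0] with x hx
    have : Jv * x⁻¹ + C₀ * (x⁻¹ * x⁻¹) = (Jv * x + C₀) / x ^ 2 := by field_simp
    rw [this, Real.sqrt_div (by positivity), Real.sqrt_sq hx.le]
    field_simp
  have := (t1.add t3).const_mul 8
  simpa using this

end PT10

/-- **Corollary (Full and restricted two-overlap distributions agree in the limit).**
Let `β > 0` and `ρ ∈ (0,λ_1)`. Then for every `r ∈ ℝ` (possibly depending on `ρ`),
`lim_{N→∞} |E𝒢_{β,N}^{×2}[1_{{q^N(v,v') ≤ r}}] − E𝒢_{β,N,ρ}^{×2}[1_{{q^N(v,v') ≤ r}}]| = 0`. -/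
theorem two_overlap_distribution_near_boundary
    (M : ℕ) (sigv lamv : ℕ → ℝ) (hparams : ScaleParams M sigv lamv)
    (P : ℕ → MeasureTheory.Measure FieldSp) (hGFF : ∀ N, IsGFF N (P N))
    (C₀ : ℝ) (hC₀ : IsVarBound M sigv lamv P C₀)
    (β ρ : ℝ) (hβ : 0 < β) (hρ0 : 0 < ρ) (hρ1 : ρ < lamv 1) (r : ℝ) :
    Filter.Tendsto (fun N =>
        |gibbsExp N M sigv lamv (P N) β 2
            (fun vv => if overlapQ N M sigv lamv (P N) C₀ (vv 0) (vv 1) ≤ r then (1 : ℝ) else 0) -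
          gibbsExpRes N M sigv lamv (P N) β ρ 2
            (fun vv _ => if overlapQ N M sigv lamv (P N) C₀ (vv 0) (vv 1) ≤ r then (1 : ℝ) else 0)|)
      Filter.atTop (nhds 0) := by
  obtain ⟨hC, N₀, hN₀⟩ := hC₀
  have hJ : 0 ≤ Jsig2 M sigv lamv 1 :=
    intervalIntegral.integral_nonneg (by norm_num) fun u _ => sq_nonneg _
  have hlog : Tendsto (fun N : ℕ => Real.log (N : ℝ)) atTop atTop :=
    Real.tendsto_log_atTop.comp tendsto_natCast_atTop_atTop
  have hlim := (lim_bound ρ β (Jsig2 M sigv lamv 1) C₀ hρ0 hJ hC).comp hlog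
  have e1 : ∀ᶠ N : ℕ in atTop, 16 ≤ (N : ℝ) ^ ρ :=
    ((tendsto_rpow_atTop hρ0).comp tendsto_natCast_atTop_atTop).eventually_ge_atTop 16
  have e2 : ∀ᶠ N : ℕ in atTop, Real.log 64 + ρ / 8 * (Real.log 8 + ((∑ i ∈ Finset.Icc 1 M, |β * cf M sigv i|) ^ 2 * (4 * C1)) * (8 / ρ) ^ 2 / 2)
      ≤ ρ / 4 * Real.log N :=
    (hlog.const_mul_atTop (by positivity : 0 < ρ / 4)).eventually_ge_atTop _
  refine squeeze_zero' (Eventually.of_forall fun N => abs_nonneg _) ?_ hlim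
  filter_upwards [e1, e2, eventually_ge_atTop 16, eventually_ge_atTop N₀] with N h1 h2 h3 h4
  have hl0 : 0 ≤ Real.log (N : ℝ) := Real.log_natCast_nonneg N
  refine main_bound hparams (hGFF N) β ρ hβ hρ0 hρ1 h3 h1 h2 (Jsig2 M sigv lamv 1 * Real.log N + C₀) (by positivity)
    (hN₀ N h4) _ ?_ ?_
  · intro x; split_ifs <;> norm_num
  · intro x; split_ifs <;> norm_num
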